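/- arXiv:1907.08913 — 2 statements merged into one kernel-verified Lean document; each statement's English description precedes it below -/
import Mathlib

section
/- With the carrier S and operators L_i as in the context, for scalars f_{ij}^k ∈ K (i,j,k ∈ I) the supercommutation relations [L_i, L_j] = ℏ Σ_{k∈I} f_{ij}^k L_k hold for all i,j ∈ I if and only if all of the following hold for all i,j ∈ I and a,b ∈ Ĩ: (A) A_{jia} = (−1)^{|i||j|} A_{ija}; (f) f_{ij}^k = (−1)^{|i||j|} B_{ij}^k − B_{ji}^k for all k ∈ I, and (−1)^{|i||j|} B_{ij}^0 = B_{ji}^0; (BA) Σ_{c∈Ĩ} [B_{ia}^c A_{jcb} + (−1)^{|a||b|} B_{ib}^c A_{jca}] + (−1)^{|i||j|} Σ_{k∈I} B_{ij}^k A_{kab} equals (−1)^{|i||j|} times the same expression with i and j exchanged; (BB−CA) Σ_{c∈Ĩ} [B_{ia}^c B_{jc}^b + (−1)^{|a||b|} C_i^{bc} A_{jca}] + (−1)^{|i||j|} Σ_{k∈I} B_{ij}^k B_{ka}^b equals (−1)^{|i||j|} times the same expression with i and j exchanged; (CB) Σ_{c∈Ĩ} [C_i^{ac} B_{jc}^b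 + (−1)^{|a||b|} C_i^{bc} B_{jc}^a] + (−1)^{|i||j|} Σ_{k∈I} B_{ij}^k C_k^{ab} equals (−1)^{|i||j|} times the same expression with i and j exchanged; (CA−BD) (1/2) Σ_{a,b∈Ĩ} C_i^{ba} A_{jab} + (−1)^{|i||j|} Σ_{k∈I} B_{ij}^k D_k equals (−1)^{|i||j|} times the same expression with i and j exchanged. -/
/-!
Statement 1: for quadratic differential operators
`L_i = ℏ∂_i − (1/2)Σ A_{iab} x̂^a x̂^b − ℏ Σ B_{ia}^b x̂^a ∂_b − (ℏ²/2) Σ C_i^{ab} ∂_a ∂_b − ℏ D_i`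
on `S = K[ℏ][x^a : |a|=0] ⊗ Λ(x^a : |a|=1)`, the supercommutation relations
`[L_i, L_j] = ℏ Σ_k f_{ij}^k L_k` hold iff the tensors satisfy the constraints
(A), (f), (BA), (BB−CA), (CB), (CA−BD) of a quadratic super quantum Airy structure.
-/

set_option synthInstance.maxHeartbeats 1000000
set_option maxHeartbeats 1000000

noncomputable section
open TensorProduct

/-- The sign `(−1)^e` for `e ∈ ℤ/2`. -/
def sg (K : Type) [Field K] (e : ZMod 2) : K := if e = 0 then 1 else -1

lemma zmod2_eq_one {x : ZMod 2} (h : ¬ x = 0) : x = 1 := by revert x h; decide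

variable (K : Type) [Field K] [CharZero K]
variable (d : ℕ) (p : Fin (d + 1) → ZMod 2)

/-- `R = K[ℏ]`. -/
abbrev R := Polynomial K
/-- `ℏ ∈ R`. -/
def hb : R K := Polynomial.X
/-- A scalar `c : K` viewed in `R`. -/
def cs (c : K) : R K := Polynomial.C c
/-- The sign `(−1)^e` viewed in `R`. -/
def sgR (e : ZMod 2) : R K := if e = 0 then 1 else -1

/-- The even part: polynomials in the even variables `x^a`, `|a| = 0`. -/
abbrev Pev := MvPolynomial {a : Fin (d + 1) // p a = 0} (R K)
/-- The odd part: the exterior algebra on the odd variables `x^a`, `|a| = 1`. -/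
abbrev Podd := ExteriorAlgebra (R K) ({a : Fin (d + 1) // p a = 1} →₀ R K)
/-- The full carrier `S = P ⊗_R Λ`. -/
abbrev SuperSpace := Pev K d p ⊗[R K] Podd K d p

/-- Left multiplication by the (even or odd) variable `x^a`. -/
def xop (a : Fin (d + 1)) : SuperSpace K d p → SuperSpace K d p :=
  if h : p a = 0 then
    LinearMap.rTensor (Podd K d p) (LinearMap.mulLeft (R K) (MvPolynomial.X ⟨a, h⟩))
  else
    LinearMap.lTensor (Pev K d p)
      (LinearMap.mulLeft (R K)
        (ExteriorAlgebra.ι (R K) (Finsupp.single ⟨a, zmod2_eq_one h⟩ 1)))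

/-- The (even or odd) partial derivative `∂_a`: for even `a` the partial derivative with
respect to `x^a`, for odd `a` the interior product with the dual basis vector. -/
def dop (a : Fin (d + 1)) : SuperSpace K d p → SuperSpace K d p :=
  if h : p a = 0 then
    LinearMap.rTensor (Podd K d p) (MvPolynomial.pderiv ⟨a, h⟩).toLinearMap
  else
    LinearMap.lTensor (Pev K d p)
      (CliffordAlgebra.contractLeft (Finsupp.lapply ⟨a, zmod2_eq_one h⟩))

/-- The quadratic differential operator
`L_i = ℏ∂_i − (1/2) Σ_{a,b} A_{iab} x̂^a x̂^b − ℏ Σ_{a,b} B_{ia}^b x̂^a ∂_b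
       − (ℏ²/2) Σ_{a,b} C_i^{ab} ∂_a ∂_b − ℏ D_i`. -/
def Lop (A B C : Fin (d + 1) → Fin (d + 1) → Fin (d + 1) → K) (D : Fin (d + 1) → K)
    (i : Fin (d + 1)) : SuperSpace K d p → SuperSpace K d p := fun v =>
  hb K • dop K d p i v
    - ∑ a : Fin (d + 1), ∑ b : Fin (d + 1),
        cs K ((2 : K)⁻¹ * A i a b) • xop K d p a (xop K d p b v)
    - ∑ a : Fin (d + 1), ∑ b : Fin (d + 1),
        (hb K * cs K (B i a b)) • xop K d p a (dop K d p b v)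
    - ∑ a : Fin (d + 1), ∑ b : Fin (d + 1),
        (cs K ((2 : K)⁻¹ * C i a b) * hb K ^ 2) • dop K d p a (dop K d p b v)
    - (hb K * cs K (D i)) • v

section Constraints

variable (A B C : Fin (d + 1) → Fin (d + 1) → Fin (d + 1) → K) (D : Fin (d + 1) → K)

/-- Left-hand side of constraint (BA); the `k`-sum runs over `I = {1, …, d}`. -/
def lhsBA (i j a b : Fin (d + 1)) : K :=
  (∑ c : Fin (d + 1), (B i a c * A j c b + sg K (p a * p b) * (B i b c * A j c a)))
    + sg K (p i * p j) *
        ∑ k : Fin (d + 1), (if k = 0 then 0 else B i j k * A k a b)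

/-- Left-hand side of constraint (BB−CA). -/
def lhsBBCA (i j a b : Fin (d + 1)) : K :=
  (∑ c : Fin (d + 1), (B i a c * B j c b + sg K (p a * p b) * (C i b c * A j c a)))
    + sg K (p i * p j) *
        ∑ k : Fin (d + 1), (if k = 0 then 0 else B i j k * B k a b)

/-- Left-hand side of constraint (CB). -/
def lhsCB (i j a b : Fin (d + 1)) : K :=
  (∑ c : Fin (d + 1), (C i a c * B j c b + sg K (p a * p b) * (C i b c * B j c a)))
    + sg K (p i * p j) *
        ∑ k : Fin (d + 1), (if k = 0 then 0 else B i j k * C k a b)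

/-- Left-hand side of constraint (CA−BD). -/
def lhsCABD (i j : Fin (d + 1)) : K :=
  (2 : K)⁻¹ * (∑ a : Fin (d + 1), ∑ b : Fin (d + 1), C i b a * A j a b)
    + sg K (p i * p j) * ∑ k : Fin (d + 1), (if k = 0 then 0 else B i j k * D k)

end Constraints

set_option linter.unusedSectionVars false
set_option linter.unusedVariables false
set_option linter.unusedSimpArgs false

def sgn (k : Type) [CommRing k] (e : ZMod 2) : k := if e = 0 then 1 else -1

lemma sgn_add (k : Type) [CommRing k] (a b : ZMod 2) : sgn k (a + b) = sgn k a * sgn k b := by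
  have h : ∀ x : ZMod 2, x = 0 ∨ x = 1 := by decide
  have h2 : (1 : ZMod 2) + 1 = 0 := by decide
  rcases h a with rfl | rfl <;> rcases h b with rfl | rfl <;> simp [sgn, h2]

lemma sgn_sq (k : Type) [CommRing k] (a : ZMod 2) : sgn k a * sgn k a = 1 := by
  unfold sgn; split_ifs <;> simp

section Abs
variable {k : Type} [CommRing k] {E : Type} [Ring E] [Algebra k E]
variable {ι : Type} [Fintype ι] [DecidableEq ι] (p : ι → ZMod 2)

def qq (Y Z : ι → E) (M : ι → ι → k) : E := ∑ a, ∑ b, M a b • (Y a * Z b)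
def ll (Y : ι → E) (u : ι → k) : E := ∑ a, u a • Y a

def HomP (M : ι → ι → k) (e : ZMod 2) : Prop := ∀ a b, e + p a + p b ≠ 0 → M a b = 0

variable {p}

lemma HomP.eq {M : ι → ι → k} {e : ZMod 2} (h : HomP p M e) (a b : ι) :
    M a b = 0 ∨ e = p a + p b := by
  by_cases h' : e + p a + p b = 0
  · right
    have : ∀ x y z : ZMod 2, x + y + z = 0 → x = y + z := by decide
    exact this _ _ _ h'
  · left; exact h a b h'

lemma qq_mul {Y Z : ι → E} {M : ι → ι → k} {e1 e2 : ZMod 2} (hM : HomP p M e1) (N : E)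
    (y z : ι → E) (hY : ∀ a, Y a * N = y a + sgn k (p a * e2) • (N * Y a))
    (hZ : ∀ a, Z a * N = z a + sgn k (p a * e2) • (N * Z a)) :
    qq Y Z M * N = qq Y z M + qq y Z (fun a b => M a b * sgn k (p b * e2))
      + sgn k (e1 * e2) • (N * qq Y Z M) := by
  simp only [qq, Finset.sum_mul, Finset.mul_sum, Finset.smul_sum, ← Finset.sum_add_distrib]
  refine Finset.sum_congr rfl fun a _ => Finset.sum_congr rfl fun b _ => ?_
  rcases hM.eq a b with h | h
  · simp [h]
  · rw [smul_mul_assoc, mul_assoc, hZ, mul_add, mul_smul_comm, ← mul_assoc (Y a) N, hY, h, add_mul (p a),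
      sgn_add, mul_smul_comm, add_mul, smul_mul_assoc, mul_assoc N]
    module

lemma mul_qq {Y Z : ι → E} {M : ι → ι → k} {e1 e2 : ZMod 2} (hM : HomP p M e1) (N : E)
    (y z : ι → E) (hY : ∀ a, N * Y a = y a + sgn k (e2 * p a) • (Y a * N))
    (hZ : ∀ a, N * Z a = z a + sgn k (e2 * p a) • (Z a * N)) :
    N * qq Y Z M = qq y Z M + qq Y z (fun a b => M a b * sgn k (e2 * p a))
      + sgn k (e2 * e1) • (qq Y Z M * N) := by
  simp only [qq, Finset.sum_mul, Finset.mul_sum, Finset.smul_sum, ← Finset.sum_add_distrib]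
  refine Finset.sum_congr rfl fun a _ => Finset.sum_congr rfl fun b _ => ?_
  rcases hM.eq a b with h | h
  · simp [h]
  · rw [mul_smul_comm, ← mul_assoc, hY, add_mul, smul_mul_assoc, mul_assoc (Y a), hZ, h, mul_add e2,
      sgn_add, mul_add, mul_smul_comm, smul_mul_assoc, mul_assoc (Y a)]
    module

/-- super Weyl relations -/
structure SWRel {E ι : Type} [DecidableEq ι] (p : ι → ZMod 2) (k : Type) [CommRing k] [Semiring E] [Algebra k E] (X D : ι → E) : Prop where
  xx : ∀ a b, X a * X b = sgn k (p a * p b) • (X b * X a)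
  dd : ∀ a b, D a * D b = sgn k (p a * p b) • (D b * D a)
  dx : ∀ a b, D a * X b = (if a = b then (1 : k) else 0) • (1 : E) + sgn k (p a * p b) • (X b * D a)

variable {X D : ι → E}

lemma SWRel.xd (r : SWRel p k X D) (a b : ι) : X a * D b =
    (- (sgn k (p a * p b) * (if a = b then (1 : k) else 0))) • (1 : E) + sgn k (p a * p b) • (D b * X a) := by
  rw [r.dx b a]
  have h := sgn_sq k (p a * p b)
  rw [mul_comm (p b)]
  simp only [eq_comm (a := b)]
  linear_combination (norm := module) (- h) • (X a * D b)

variable {A B C : ι → ι → k} {A' B' C' : ι → ι → k} {e e' : ZMod 2}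

lemma qq_delta_left (Z : ι → E) (M : ι → ι → k) (c : ι) :
    qq (fun a => (if c = a then (1 : k) else 0) • (1 : E)) Z M = ll Z (M c) := by
  simp only [qq, ll]
  rw [Finset.sum_eq_single c]
  · simp
  · intro b _ hb; simp [hb.symm]
  · simp

lemma SWRel.DqX (r : SWRel p k X D) (hA : HomP p A e) (hs : ∀ a b, A a b = sgn k (p a * p b) * A b a) (c : ι) :
    D c * qq X X A = (2 : k) • ll X (A c) + sgn k (p c * e) • (qq X X A * D c) := by
  rw [mul_qq hA (D c) _ _ (r.dx c) (r.dx c), qq_delta_left]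
  congr 1
  rw [two_smul]
  congr 1
  simp only [qq, ll]
  refine Finset.sum_congr rfl fun a _ => ?_
  rw [Finset.sum_eq_single c]
  · simp [hs c a, mul_comm]
  · intro b _ hb; simp [hb.symm]
  · simp

lemma SWRel.XqX (r : SWRel p k X D) (hA : HomP p A e) (c : ι) :
    X c * qq X X A = sgn k (p c * e) • (qq X X A * X c) := by
  rw [mul_qq hA (X c) 0 0 (by simpa using r.xx c) (by simpa using r.xx c)]
  simp [qq]

lemma SWRel.DqD (r : SWRel p k X D) (hA : HomP p A e) (c : ι) :
    D c * qq D D A = sgn k (p c * e) • (qq D D A * D c) := by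
  rw [mul_qq hA (D c) 0 0 (by simpa using r.dd c) (by simpa using r.dd c)]
  simp [qq]

lemma SWRel.DqM (r : SWRel p k X D) (hB : HomP p B e) (c : ι) :
    D c * qq X D B = ll D (B c) + sgn k (p c * e) • (qq X D B * D c) := by
  rw [mul_qq hB (D c) _ 0 (r.dx c) (by simpa using r.dd c), qq_delta_left]
  simp [qq]

lemma SWRel.XqM (r : SWRel p k X D) (hB : HomP p B e) (c : ι) :
    X c * qq X D B = (- sgn k (p c * e)) • ll X (fun a => B a c)
      + sgn k (p c * e) • (qq X D B * X c) := by
  rw [mul_qq hB (X c) 0 _ (by simpa using r.xx c) (r.xd c)]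
  congr 1
  simp only [qq, ll, Finset.smul_sum]
  simp only [Pi.zero_apply, zero_mul, smul_zero, Finset.sum_const_zero, zero_add]
  refine Finset.sum_congr rfl fun a _ => ?_
  rw [Finset.sum_eq_single c]
  · rcases hB.eq a c with h | h
    · simp [h]
    · rw [h, mul_add, sgn_add]
      simp only [if_true, mul_smul_comm, mul_one]
      module
  · intro b _ hb; simp [hb.symm]
  · simp

lemma SWRel.b1 (r : SWRel p k X D) (hA : HomP p A e) (hA' : HomP p A' e') :
    qq X X A * qq X X A' = sgn k (e * e') • (qq X X A' * qq X X A) := by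
  rw [qq_mul hA (qq X X A') 0 0 (by simpa using r.XqX hA') (by simpa using r.XqX hA')]
  simp [qq]

lemma SWRel.b6 (r : SWRel p k X D) (hA : HomP p A e) (hA' : HomP p A' e') :
    qq D D A * qq D D A' = sgn k (e * e') • (qq D D A' * qq D D A) := by
  rw [qq_mul hA (qq D D A') 0 0 (by simpa using r.DqD hA') (by simpa using r.DqD hA')]
  simp [qq]

lemma qq_ll_right (Y Z : ι → E) (M N : ι → ι → k) :
    qq Y (fun c => ll Z (N c)) M = qq Y Z (fun a b => ∑ c, M a c * N c b) := by
  simp only [qq, ll, Finset.mul_sum, Finset.smul_sum, Finset.sum_smul, mul_smul_comm, smul_smul]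
  refine Finset.sum_congr rfl fun a _ => ?_
  rw [Finset.sum_comm]

lemma qq_ll_left (Y Z : ι → E) (M N : ι → ι → k) :
    qq (fun c => ll Y (N c)) Z M = qq Y Z (fun a b => ∑ c, M c b * N c a) := by
  simp only [qq, ll, Finset.sum_mul, Finset.smul_sum, Finset.sum_smul, smul_mul_assoc, smul_smul]
  conv_rhs => rw [Finset.sum_comm]
  rw [Finset.sum_comm]
  refine Finset.sum_congr rfl fun a _ => ?_
  rw [Finset.sum_comm]

lemma qq_smul_right (t : k) (Y Z : ι → E) (M : ι → ι → k) :
    qq Y (fun c => t • Z c) M = t • qq Y Z M := by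
  simp only [qq, Finset.smul_sum, mul_smul_comm, smul_smul, mul_comm]

lemma qq_congr (Y Z : ι → E) (M N : ι → ι → k) (h : ∀ a b, M a b = N a b) :
    qq Y Z M = qq Y Z N := by
  have : M = N := by ext a b; exact h a b
  rw [this]

lemma qq_smul (t : k) (Y Z : ι → E) (M : ι → ι → k) :
    qq Y Z (fun a b => t * M a b) = t • qq Y Z M := by
  simp only [qq, Finset.smul_sum, smul_smul]

lemma SWRel.b2 (r : SWRel p k X D) (hB : HomP p B e) (hA' : HomP p A' e') (hs : ∀ a b, A' a b = sgn k (p a * p b) * A' b a) :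
    qq X D B * qq X X A' = (2 : k) • qq X X (fun a b => ∑ c, B a c * A' c b)
      + sgn k (e * e') • (qq X X A' * qq X D B) := by
  rw [qq_mul hB (qq X X A') 0 _ (by simpa using r.XqX hA') (r.DqX hA' hs), qq_smul_right, qq_ll_right]
  simp [qq]

lemma SWRel.b3 (r : SWRel p k X D) (hB : HomP p B e) (hB' : HomP p B' e') :
    qq X D B * qq X D B' = qq X D (fun a b => ∑ c, B a c * B' c b)
      - sgn k (e * e') • qq X D (fun a b => ∑ c, B' a c * B c b)
      + sgn k (e * e') • (qq X D B' * qq X D B) := by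
  rw [qq_mul hB (qq X D B') _ _ (r.XqM hB') (r.DqM hB'), qq_ll_right]
  congr 1
  rw [sub_eq_add_neg]
  congr 1
  rw [← neg_smul, ← qq_smul]
  have : ∀ c, (- sgn k (p c * e')) • ll X (fun a => B' a c) = ll X ((fun c a => (- sgn k (p c * e')) * B' a c) c) := by
    intro c; simp [ll, Finset.smul_sum, smul_smul]
  simp only [this]
  rw [qq_ll_left]
  refine qq_congr _ _ _ _ fun a b => ?_
  rw [Finset.mul_sum]
  refine Finset.sum_congr rfl fun c _ => ?_
  rcases hB.eq c b with h | h
  · simp [h]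
  · rw [h, add_mul, sgn_add]; ring

lemma SWRel.b5 (r : SWRel p k X D) (hC : HomP p C e) (hs : ∀ a b, C a b = sgn k (p a * p b) * C b a) (hB' : HomP p B' e') :
    qq D D C * qq X D B' = (2 : k) • qq D D (fun a b => ∑ c, C a c * B' c b)
      + sgn k (e * e') • (qq X D B' * qq D D C) := by
  rw [qq_mul hC (qq X D B') _ _ (r.DqM hB') (r.DqM hB'), qq_ll_right, qq_ll_left, two_smul]
  congr 2
  simp only [qq]
  rw [Finset.sum_comm]
  refine Finset.sum_congr rfl fun a _ => Finset.sum_congr rfl fun b _ => ?_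
  rw [r.dd b a, smul_smul, Finset.sum_mul]
  congr 1
  refine Finset.sum_congr rfl fun c _ => ?_
  rcases hB'.eq c b with h | h
  · simp [h]
  · rw [hs a c, h, mul_add, sgn_add, mul_comm (p b)]
    linear_combination (C c a * B' c b * sgn k (p a * p c)) * sgn_sq k (p a * p b)

lemma SWRel.b4 (r : SWRel p k X D) (hC : HomP p C e) (hs : ∀ a b, C a b = sgn k (p a * p b) * C b a) 
    (hA' : HomP p A' e') (hs' : ∀ a b, A' a b = sgn k (p a * p b) * A' b a) :
    qq D D C * qq X X A' = 
      (4 : k) • qq X D (fun a b => sgn k (p a * p b) * ∑ c, C b c * A' c a)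
      + (2 : k) • ((∑ a, ∑ b, C b a * A' a b) • (1 : E))
      + sgn k (e * e') • (qq X X A' * qq D D C) := by
  rw [qq_mul hC (qq X X A') _ _ (r.DqX hA' hs') (r.DqX hA' hs')]
  congr 1
  rw [qq_smul_right, qq_ll_right]
  have h2 : ∀ c, (2 : k) • ll X (A' c) = ll X ((fun c a => 2 * A' c a) c) := by
    intro c; simp [ll, Finset.smul_sum, smul_smul]
  simp only [h2]
  rw [qq_ll_left]
  have h3 : qq D X (fun a b => ∑ c, C a c * A' c b) = (∑ a, ∑ b, C b a * A' a b) • (1 : E)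
      + qq X D (fun a b => sgn k (p a * p b) * ∑ c, C b c * A' c a) := by
    have h4 : ∀ a b, (∑ c, C a c * A' c b) • (D a * X b) =
      (∑ c, C a c * A' c b) • ((if a = b then (1 : k) else 0) • (1 : E))
       + (sgn k (p b * p a) * ∑ c, C a c * A' c b) • (X b * D a) := by
      intro a b
      rw [r.dx, mul_comm (p b)]; module
    simp only [qq, h4, Finset.sum_add_distrib]
    congr 1
    · rw [Finset.sum_comm, Finset.sum_smul]
      simp only [Finset.sum_smul]
      rw [Finset.sum_comm]
      rw [Finset.sum_comm]
      simp
      rw [Finset.sum_comm]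
    · rw [Finset.sum_comm]
  have h5 : qq X D (fun a b => ∑ c, C c b * sgn k (p b * e') * (2 * A' c a)) = 
     (2 : k) • qq X D (fun a b => sgn k (p a * p b) * ∑ c, C b c * A' c a) := by
    rw [← qq_smul]
    refine qq_congr _ _ _ _ fun a b => ?_
    simp only [Finset.mul_sum]
    refine Finset.sum_congr rfl fun c _ => ?_
    rcases hA'.eq c a with h | h
    · simp [h]
    · rw [hs b c, h, mul_add, sgn_add, mul_comm (p b) (p a)]
      ring
  rw [h3, h5]
  module

lemma flipB {s : k} (hs : s * s = 1) {P Q u : E} (h : P * Q = u + s • (Q * P)) :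
    Q * P - s • (P * Q) = - (s • u) := by
  rw [h]
  linear_combination (norm := module) (-hs) • (Q * P)

lemma subB {s : k} {P Q u : E} (h : P * Q = u + s • (Q * P)) :
    P * Q - s • (Q * P) = u := by
  rw [h]; module

def Mop (X D : ι → E) (h hf : k) (A B C : ι → ι → k) (i : ι) : E :=
  h • D i - hf • qq X X A - h • qq X D B - (hf * h ^ 2) • qq D D C

def Lgen (X D : ι → E) (h hf : k) (A B C : ι → ι → k) (d : k) (i : ι) : E :=
  Mop X D h hf A B C i - (h * d) • (1 : E)

lemma SWRel.M (r : SWRel p k X D) {h hf : k} (hhf : hf * 2 = 1) {i j : ι}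
    (hA : HomP p A (p i)) (hA' : HomP p A' (p j))
    (hB : HomP p B (p i)) (hB' : HomP p B' (p j))
    (hC : HomP p C (p i)) (hC' : HomP p C' (p j))
    (sA : ∀ a b, A a b = sgn k (p a * p b) * A b a)
    (sA' : ∀ a b, A' a b = sgn k (p a * p b) * A' b a)
    (sC : ∀ a b, C a b = sgn k (p a * p b) * C b a)
    (sC' : ∀ a b, C' a b = sgn k (p a * p b) * C' b a) :
    Mop X D h hf A B C i * Mop X D h hf A' B' C' j
      - sgn k (p i * p j) • (Mop X D h hf A' B' C' j * Mop X D h hf A B C i) =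
    ((h * sgn k (p i * p j)) • ll X (A j) - h • ll X (A' i))
    + ((h ^ 2 * sgn k (p i * p j)) • ll D (B j) - h ^ 2 • ll D (B' i))
    + h • (qq X X (fun a b => ∑ c, B a c * A' c b)
       - sgn k (p i * p j) • qq X X (fun a b => ∑ c, B' a c * A c b))
    + h ^ 2 • (qq X D (fun a b => ∑ c, B a c * B' c b)
        + qq X D (fun a b => sgn k (p a * p b) * ∑ c, C b c * A' c a)
       - sgn k (p i * p j) • (qq X D (fun a b => ∑ c, B' a c * B c b)
        + qq X D (fun a b => sgn k (p a * p b) * ∑ c, C' b c * A c a)))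
    + h ^ 3 • (qq D D (fun a b => ∑ c, C a c * B' c b)
       - sgn k (p i * p j) • qq D D (fun a b => ∑ c, C' a c * B c b))
    + h ^ 2 • (hf • ((∑ a, ∑ b, C b a * A' a b) • (1 : E))
       - sgn k (p i * p j) • hf • ((∑ a, ∑ b, C' b a * A a b) • (1 : E))) := by
  have c := mul_comm (p j) (p i)
  set s := sgn k (p i * p j) with hs
  have ss : s * s = 1 := sgn_sq k _
  have e1 : D i * D j - s • (D j * D i) = 0 := subB (by simpa using r.dd i j)
  have e2 := subB (r.DqX hA' sA' i)
  have e3 := r.DqX hA sA j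
  rw [c, ← hs] at e3
  replace e3 := flipB ss e3
  have e4 := subB (r.DqM hB' i)
  have e5 := r.DqM hB j
  rw [c, ← hs] at e5
  replace e5 := flipB ss e5
  have e6 : D i * qq D D C' - s • (qq D D C' * D i) = 0 := subB (by simpa using r.DqD hC' i)
  have e7 := r.DqD hC j
  rw [c, ← hs, ← zero_add (s • _)] at e7
  replace e7 := flipB ss e7
  have e8 : qq X X A * qq X X A' - s • (qq X X A' * qq X X A) = 0 := subB (by simpa using r.b1 hA hA')
  have e9 := subB (r.b2 hB hA' sA')
  have e10 := r.b2 hB' hA sA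
  rw [c, ← hs] at e10
  replace e10 := flipB ss e10
  have e11 := subB (r.b3 hB hB')
  have e12 := subB (r.b4 hC sC hA' sA')
  have e13 := r.b4 hC' sC' hA sA
  rw [c, ← hs] at e13
  replace e13 := flipB ss e13
  have e14 := subB (r.b5 hC sC hB')
  have e15 := r.b5 hC' sC' hB
  rw [c, ← hs] at e15
  replace e15 := flipB ss e15
  have e16 : qq D D C * qq D D C' - s • (qq D D C' * qq D D C) = 0 := subB (by simpa using r.b6 hC hC')
  rw [← hs] at e2 e4 e9 e11 e12 e14
  clear_value s
  have h4 : hf * hf * 4 = 1 := by linear_combination (hf * 2 + 1) * hhf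
  have h5 : hf * hf * 2 = hf := by linear_combination hf * hhf
  have f2 : hf • (D i * qq X X A' - s • (qq X X A' * D i)) = ll X (A' i) := by
    rw [e2]; linear_combination (norm := module) hhf • ll X (A' i)
  have f3 : hf • (qq X X A * D j - s • (D j * qq X X A)) = - (s • ll X (A j)) := by
    rw [e3]; linear_combination (norm := module) (- hhf) • (s • ll X (A j))
  have f9 : hf • (qq X D B * qq X X A' - s • (qq X X A' * qq X D B)) = _ :=
    congrArg (fun z => hf • z) e9
  have f10 : hf • (qq X X A * qq X D B' - s • (qq X D B' * qq X X A)) = _ :=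
    congrArg (fun z => hf • z) e10
  have f14 : hf • (qq D D C * qq X D B' - s • (qq X D B' * qq D D C)) = _ :=
    congrArg (fun z => hf • z) e14
  have f15 : hf • (qq X D B * qq D D C' - s • (qq D D C' * qq X D B)) = _ :=
    congrArg (fun z => hf • z) e15
  have f12 : (hf * hf) • (qq D D C * qq X X A' - s • (qq X X A' * qq D D C)) = _ :=
    congrArg (fun z => (hf * hf) • z) e12
  have f13 : (hf * hf) • (qq X X A * qq D D C' - s • (qq D D C' * qq X X A)) = _ :=
    congrArg (fun z => (hf * hf) • z) e13
  clear e2 e3 e9 e10 e14 e15 e12 e13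
  have g2 : ∀ z : E, hf • (2 : k) • z = z := fun z => by rw [smul_smul, hhf, one_smul]
  have g3 : ∀ z : E, hf • s • z = s • hf • z := fun z => smul_comm _ _ _
  have g4 : ∀ z : E, (hf * hf) • (4 : k) • z = z := fun z => by rw [smul_smul, h4, one_smul]
  have g5 : ∀ z : E, (hf * hf) • (2 : k) • z = hf • z := fun z => by rw [smul_smul, h5]
  have g6 : ∀ z : E, (hf * hf) • s • z = s • (hf * hf) • z := fun z => smul_comm _ _ _
  rw [g2] at f9 f14
  rw [smul_neg, g3, g2] at f10 f15
  rw [smul_add, g4, g5] at f12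
  rw [smul_neg, g6, smul_add, g4, g5] at f13
  unfold Mop
  simp only [mul_sub, sub_mul, smul_mul_assoc, mul_smul_comm]
  linear_combination (norm := module) h ^ 2 • e1 - h • f2 - h • f3 - h ^ 2 • e4 - h ^ 2 • e5
    - (hf * h ^ 3) • e6 - (hf * h ^ 3) • e7 + (hf * hf) • e8 + h • f9 + h • f10 + h ^ 2 • e11
    + h ^ 2 • f12 + h ^ 2 • f13 + h ^ 3 • f14 + h ^ 3 • f15 + (hf * hf * h ^ 4) • e16

lemma SWRel.L (r : SWRel p k X D) {h hf : k} (hhf : hf * 2 = 1) {i j : ι} {d d' : k}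
    (hA : HomP p A (p i)) (hA' : HomP p A' (p j))
    (hB : HomP p B (p i)) (hB' : HomP p B' (p j))
    (hC : HomP p C (p i)) (hC' : HomP p C' (p j))
    (sA : ∀ a b, A a b = sgn k (p a * p b) * A b a)
    (sA' : ∀ a b, A' a b = sgn k (p a * p b) * A' b a)
    (sC : ∀ a b, C a b = sgn k (p a * p b) * C b a)
    (sC' : ∀ a b, C' a b = sgn k (p a * p b) * C' b a)
    (hd : p i ≠ 0 → d = 0) (hd' : p j ≠ 0 → d' = 0) :
    Lgen X D h hf A B C d i * Lgen X D h hf A' B' C' d' j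
      - sgn k (p i * p j) • (Lgen X D h hf A' B' C' d' j * Lgen X D h hf A B C d i) =
    Mop X D h hf A B C i * Mop X D h hf A' B' C' j
      - sgn k (p i * p j) • (Mop X D h hf A' B' C' j * Mop X D h hf A B C i) := by
  have h1 : d * sgn k (p i * p j) = d := by
    by_cases hh : p i = 0
    · simp [hh, sgn]
    · simp [hd hh]
  have h2 : d' * sgn k (p i * p j) = d' := by
    by_cases hh : p j = 0
    · simp [hh, sgn]
    · simp [hd' hh]
  unfold Lgen
  simp only [mul_sub, sub_mul, smul_mul_assoc, mul_smul_comm, mul_one, one_mul]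
  linear_combination (norm := module) (h * h1) • Mop X D h hf A' B' C' j
    + (h * h2) • Mop X D h hf A B C i - (h * h * d' * h1) • (1 : E)

/-- normal form -/
def NF (X D : ι → E) (α β : ι → k) (γ δ η : ι → ι → k) (ζ : k) : E :=
  ll X α + ll D β + qq X X γ + qq X D δ + qq D D η + ζ • (1 : E)

lemma ll_add (Y : ι → E) (u v : ι → k) : ll Y (u + v) = ll Y u + ll Y v := by
  simp [ll, add_smul, Finset.sum_add_distrib]
lemma ll_smul (Y : ι → E) (t : k) (v : ι → k) : ll Y (t • v) = t • ll Y v := by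
  simp [ll, mul_smul, Finset.smul_sum]
lemma qq_add (Y Z : ι → E) (u v : ι → ι → k) : qq Y Z (u + v) = qq Y Z u + qq Y Z v := by
  simp [qq, add_smul, Finset.sum_add_distrib]
lemma qq_smul' (Y Z : ι → E) (t : k) (v : ι → ι → k) : qq Y Z (t • v) = t • qq Y Z v := by
  simp [qq, mul_smul, Finset.smul_sum]
lemma qq_zero (Y Z : ι → E) : qq Y Z (0 : ι → ι → k) = 0 := by simp [qq]
lemma ll_zero (Y : ι → E) : ll Y (0 : ι → k) = 0 := by simp [ll]
lemma ll_sum (Y : ι → E) (g : ι → ι → k) : ll Y (∑ l, g l) = ∑ l, ll Y (g l) := by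
  simp [ll, Finset.sum_smul]; rw [Finset.sum_comm]
lemma qq_sum (Y Z : ι → E) (g : ι → ι → ι → k) : qq Y Z (∑ l, g l) = ∑ l, qq Y Z (g l) := by
  simp only [qq, Finset.sum_apply, Finset.sum_smul]
  conv_rhs => rw [Finset.sum_comm]
  refine Finset.sum_congr rfl fun a _ => ?_
  rw [Finset.sum_comm]

lemma SWRel.T (r : SWRel p k X D) {h hf : k} (hhf : hf * 2 = 1) {i j : ι}
    {A B C : ι → ι → ι → k} {d : ι → k} {f : ι → k}
    (hA : HomP p (A i) (p i)) (hA' : HomP p (A j) (p j))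
    (hB : HomP p (B i) (p i)) (hB' : HomP p (B j) (p j))
    (hC : HomP p (C i) (p i)) (hC' : HomP p (C j) (p j))
    (sA : ∀ a b, A i a b = sgn k (p a * p b) * A i b a)
    (sA' : ∀ a b, A j a b = sgn k (p a * p b) * A j b a)
    (sC : ∀ a b, C i a b = sgn k (p a * p b) * C i b a)
    (sC' : ∀ a b, C j a b = sgn k (p a * p b) * C j b a)
    (hd : p i ≠ 0 → d i = 0) (hd' : p j ≠ 0 → d j = 0) :
    Lgen X D h hf (A i) (B i) (C i) (d i) i * Lgen X D h hf (A j) (B j) (C j) (d j) j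
      - sgn k (p i * p j) •
        (Lgen X D h hf (A j) (B j) (C j) (d j) j * Lgen X D h hf (A i) (B i) (C i) (d i) i)
      - ∑ l, (h * f l) • Lgen X D h hf (A l) (B l) (C l) (d l) l =
    NF X D (fun a => h * (sgn k (p i * p j) * A i j a - A j i a))
      (fun a => h ^ 2 * (sgn k (p i * p j) * B i j a - B j i a - f a))
      (fun a b => h * ((∑ c, B i a c * A j c b) - sgn k (p i * p j) * (∑ c, B j a c * A i c b)
         + hf * ∑ l, f l * A l a b))
      (fun a b => h ^ 2 * ((∑ c, B i a c * B j c b) + sgn k (p a * p b) * (∑ c, C i b c * A j c a)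
         - sgn k (p i * p j) * ((∑ c, B j a c * B i c b)
            + sgn k (p a * p b) * (∑ c, C j b c * A i c a))
         + ∑ l, f l * B l a b))
      (fun a b => h ^ 3 * ((∑ c, C i a c * B j c b) - sgn k (p i * p j) * (∑ c, C j a c * B i c b)
         + hf * ∑ l, f l * C l a b))
      (h ^ 2 * (hf * (∑ a, ∑ b, C i b a * A j a b)
         - sgn k (p i * p j) * (hf * (∑ a, ∑ b, C j b a * A i a b)) + ∑ l, f l * d l)) := by
  rw [r.L hhf hA hA' hB hB' hC hC' sA sA' sC sC' hd hd', r.M hhf hA hA' hB hB' hC hC' sA sA' sC sC']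
  set s := sgn k (p i * p j)
  have hsum : ∑ l, (h * f l) • Lgen X D h hf (A l) (B l) (C l) (d l) l =
     h ^ 2 • ll D f - (h * hf) • qq X X (fun a b => ∑ l, f l * A l a b)
     - h ^ 2 • qq X D (fun a b => ∑ l, f l * B l a b)
     - (hf * h ^ 3) • qq D D (fun a b => ∑ l, f l * C l a b)
     - (h ^ 2 * ∑ l, f l * d l) • (1 : E) := by
    have q : ∀ (Y Z : ι → E) (A : ι → ι → ι → k), qq Y Z (fun a b => ∑ l, f l * A l a b) =
        ∑ l, f l • qq Y Z (A l) := by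
      intro Y Z A
      simp only [← qq_smul', ← qq_sum]
      refine qq_congr _ _ _ _ fun a b => ?_
      simp
    rw [q, q, q]
    simp only [ll, Finset.mul_sum, Finset.smul_sum, Finset.sum_smul, ← Finset.sum_sub_distrib]
    refine Finset.sum_congr rfl fun l _ => ?_
    unfold Lgen Mop
    module
  rw [hsum]
  have n1 : (fun a => h * (s * A i j a - A j i a)) = (h * s) • A i j + (- h) • A j i := by
    ext a; simp; ring
  have n2 : (fun a => h ^ 2 * (s * B i j a - B j i a - f a)) =
      (h ^ 2 * s) • B i j + (- h ^ 2) • B j i + (- h ^ 2) • f := by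
    ext a; simp; ring
  have n3 : (fun a b => h * ((∑ c, B i a c * A j c b) - s * (∑ c, B j a c * A i c b)
         + hf * ∑ l, f l * A l a b)) = h • (fun a b => ∑ c, B i a c * A j c b)
          + (- h * s) • (fun a b => ∑ c, B j a c * A i c b)
          + (h * hf) • (fun a b => ∑ l, f l * A l a b) := by
    ext a b; simp; ring
  have n4 : (fun a b => h ^ 2 * ((∑ c, B i a c * B j c b)
          + sgn k (p a * p b) * (∑ c, C i b c * A j c a)
         - s * ((∑ c, B j a c * B i c b)
            + sgn k (p a * p b) * (∑ c, C j b c * A i c a))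
         + ∑ l, f l * B l a b)) = h ^ 2 • (fun a b => ∑ c, B i a c * B j c b)
         + h ^ 2 • (fun a b => sgn k (p a * p b) * (∑ c, C i b c * A j c a))
         + (- h ^ 2 * s) • (fun a b => ∑ c, B j a c * B i c b)
         + (- h ^ 2 * s) • (fun a b => sgn k (p a * p b) * (∑ c, C j b c * A i c a))
         + h ^ 2 • (fun a b => ∑ l, f l * B l a b) := by
    ext a b; simp; ring
  have n5 : (fun a b => h ^ 3 * ((∑ c, C i a c * B j c b) - s * (∑ c, C j a c * B i c b)
         + hf * ∑ l, f l * C l a b)) = h ^ 3 • (fun a b => ∑ c, C i a c * B j c b)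
          + (- h ^ 3 * s) • (fun a b => ∑ c, C j a c * B i c b)
          + (h ^ 3 * hf) • (fun a b => ∑ l, f l * C l a b) := by
    ext a b; simp; ring
  rw [n1, n2, n3, n4, n5, NF]
  simp only [ll_add, ll_smul, qq_add, qq_smul']
  module

lemma qq_symm (r : SWRel p k X D) {hf : k} (hhf : hf * 2 = 1) (Y : ι → E)
    (hY : ∀ a b, Y a * Y b = sgn k (p a * p b) • (Y b * Y a)) (γ : ι → ι → k)
    (hγ : ∀ a b, γ a b + sgn k (p a * p b) * γ b a = 0) : qq Y Y γ = 0 := by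
  have h1 : qq Y Y γ = qq Y Y (fun a b => sgn k (p a * p b) * γ b a) := by
    simp only [qq]
    rw [Finset.sum_comm]
    refine Finset.sum_congr rfl fun a _ => Finset.sum_congr rfl fun b _ => ?_
    rw [hY b a, smul_smul, mul_comm (p b), mul_comm]
  have h2 : qq Y Y γ + qq Y Y γ = 0 := by
    nth_rw 2 [h1]
    rw [← qq_add, ← qq_zero (k := k) Y Y]
    exact qq_congr _ _ _ _ hγ
  calc qq Y Y γ = (hf * 2) • qq Y Y γ := by rw [hhf, one_smul]
    _ = hf • (qq Y Y γ + qq Y Y γ) := by module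
    _ = 0 := by rw [h2, smul_zero]

lemma NF_zero (r : SWRel p k X D) {hf : k} (hhf : hf * 2 = 1)
    (α β : ι → k) (γ δ η : ι → ι → k) (ζ : k) (hα : ∀ a, α a = 0) (hβ : ∀ a, β a = 0)
    (hγ : ∀ a b, γ a b + sgn k (p a * p b) * γ b a = 0)
    (hδ : ∀ a b, δ a b = 0) (hη : ∀ a b, η a b + sgn k (p a * p b) * η b a = 0) (hζ : ζ = 0) :
    NF X D α β γ δ η ζ = 0 := by
  obtain rfl : α = 0 := funext hα
  obtain rfl : β = 0 := funext hβ
  obtain rfl : δ = 0 := funext fun a => funext fun b => hδ a b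
  rw [NF, qq_symm r hhf X r.xx γ hγ, qq_symm r hhf D r.dd η hη, hζ]
  simp [ll_zero, qq_zero]

section Vac
variable {V : Type} [AddCommGroup V] [Module k V] {X D : ι → Module.End k V}
  (v : V) (φ : V →ₗ[k] k)

lemma NF_inj (r : SWRel p k X D) (hv : φ v = 1) (hD : ∀ a, D a v = 0) (hX : ∀ a w, φ (X a w) = 0)
    (α β : ι → k) (γ δ η : ι → ι → k) (ζ : k) (h0 : NF X D α β γ δ η ζ = 0) :
    (∀ a, α a = 0) ∧ (∀ a, β a = 0) ∧ (∀ a b, γ a b + sgn k (p a * p b) * γ b a = 0) ∧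
    (∀ a b, δ a b = 0) ∧ (∀ a b, η a b + sgn k (p a * p b) * η b a = 0) ∧ ζ = 0 := by
  obtain ⟨Δ, hΔ⟩ : ∃ Δ : ι → ι → k, ∀ a b, Δ a b = if a = b then (1 : k) else 0 := ⟨_, fun _ _ => rfl⟩
  have dx : ∀ a b w, D a (X b w) = Δ a b • w
      + sgn k (p a * p b) • X b (D a w) := fun a b w => by
    have := congrArg (fun T => T w) (r.dx a b)
    rw [← hΔ] at this
    simpa using this
  have ex : ∀ w, ∑ a, α a • X a w + ∑ a, β a • D a w + ∑ a, ∑ b, γ a b • X a (X b w)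
      + ∑ a, ∑ b, δ a b • X a (D b w) + ∑ a, ∑ b, η a b • D a (D b w) + ζ • w = 0 := fun w => by
    simpa [NF, ll, qq] using congrArg (fun T => T w) h0
  have hζ : ζ = 0 := by
    simpa [hD, hX, hv] using congrArg φ (ex v)
  subst hζ
  refine ⟨fun c => ?_, fun c => ?_, fun c e => ?_, fun c e => ?_, fun c e => ?_, rfl⟩
  · have := congrArg (fun w => φ (D c w)) (ex v)
    simp [hD, hX, hv, dx] at this
    simpa [hΔ, Finset.sum_add_distrib, mul_add, ite_and, Finset.sum_ite_irrel, mul_comm] using this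
  · have := congrArg φ (ex (X c v))
    simp [hD, hX, hv, dx] at this
    simpa [hΔ, Finset.sum_add_distrib, mul_add, ite_and, Finset.sum_ite_irrel, mul_comm] using this
  · have := congrArg (fun w => φ (D e (D c w))) (ex v)
    simp [hD, hX, hv, dx] at this
    simpa [hΔ, Finset.sum_add_distrib, mul_add, ite_and, Finset.sum_ite_irrel, mul_comm] using this
  · have := congrArg (fun w => φ (D c w)) (ex (X e v))
    simp [hD, hX, hv, dx] at this
    simpa [hΔ, Finset.sum_add_distrib, mul_add, ite_and, Finset.sum_ite_irrel, mul_comm] using this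
  · have := congrArg φ (ex (X e (X c v)))
    simp [hD, hX, hv, dx] at this
    simpa [hΔ, Finset.sum_add_distrib, mul_add, ite_and, Finset.sum_ite_irrel, mul_comm] using this
end Vac

section Key
variable {V : Type} [AddCommGroup V] [Module k V] {X D : ι → Module.End k V}

lemma Lgen_apply (h hf : k) (A hA B C hC : ι → ι → k) (d : k) (i : ι) (v : V)
    (h1 : ∀ a b, hA a b = hf * A a b) (h2 : ∀ a b, hC a b = hf * C a b) :
    h • D i v - ∑ a, ∑ b, hA a b • X a (X b v) - ∑ a, ∑ b, (h * B a b) • X a (D b v)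
      - ∑ a, ∑ b, (hC a b * h ^ 2) • D a (D b v) - (h * d) • v
     = Lgen X D h hf A B C d i v := by
  simp only [h1, h2, Lgen, Mop, qq, LinearMap.sub_apply, LinearMap.smul_apply,
    LinearMap.sum_apply, Module.End.mul_apply, Module.End.one_apply, Finset.smul_sum, smul_smul]
  congr 2
  refine Finset.sum_congr rfl fun a _ => Finset.sum_congr rfl fun b _ => ?_
  congr 1
  ring

lemma key {F : Type} [Field F] [CharZero F] [IsDomain k] (c : F →+* k)
    (v : V) (φ : V →ₗ[k] k) (r : SWRel p k X D) (hv : φ v = 1) (hD : ∀ a, D a v = 0)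
    (hX : ∀ a w, φ (X a w) = 0) {h : k} (hh : h ≠ 0) {i j : ι}
    {A B C : ι → ι → ι → F} {d : ι → F} {f : ι → F} (z : ι) (Lf : ι → V → V)
    (hL : ∀ i w, Lf i w = Lgen X D h (c 2⁻¹) (fun a b => c (A i a b)) (fun a b => c (B i a b))
      (fun a b => c (C i a b)) (c (d i)) i w)
    (hA : HomP p (A i) (p i)) (hA' : HomP p (A j) (p j))
    (hB : HomP p (B i) (p i)) (hB' : HomP p (B j) (p j))
    (hC : HomP p (C i) (p i)) (hC' : HomP p (C j) (p j))
    (sA : ∀ a b, A i a b = sgn F (p a * p b) * A i b a)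
    (sA' : ∀ a b, A j a b = sgn F (p a * p b) * A j b a)
    (sC : ∀ a b, C i a b = sgn F (p a * p b) * C i b a)
    (sC' : ∀ a b, C j a b = sgn F (p a * p b) * C j b a)
    (hd : p i ≠ 0 → d i = 0) (hd' : p j ≠ 0 → d j = 0) (g : ι → F)
    (hg : ∀ l, g l = if l = z then 0 else f l) :
    (∀ w, Lf i (Lf j w) - sgn k (p i * p j) • Lf j (Lf i w)
      = ∑ l, (if l = z then 0 else (h * c (f l)) • Lf l w)) ↔
    ((∀ a, sgn F (p i * p j) * A i j a - A j i a = 0) ∧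
     (∀ a, sgn F (p i * p j) * B i j a - B j i a - g a = 0) ∧
     (∀ a b, ((∑ c, B i a c * A j c b) - sgn F (p i * p j) * (∑ c, B j a c * A i c b)
         + 2⁻¹ * ∑ l, g l * A l a b) +
       sgn F (p a * p b) * ((∑ c, B i b c * A j c a) - sgn F (p i * p j) * (∑ c, B j b c * A i c a)
         + 2⁻¹ * ∑ l, g l * A l b a) = 0) ∧
     (∀ a b, (∑ c, B i a c * B j c b) + sgn F (p a * p b) * (∑ c, C i b c * A j c a)
         - sgn F (p i * p j) * ((∑ c, B j a c * B i c b)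
            + sgn F (p a * p b) * (∑ c, C j b c * A i c a))
         + ∑ l, g l * B l a b = 0) ∧
     (∀ a b, ((∑ c, C i a c * B j c b) - sgn F (p i * p j) * (∑ c, C j a c * B i c b)
         + 2⁻¹ * ∑ l, g l * C l a b) +
       sgn F (p a * p b) * ((∑ c, C i b c * B j c a) - sgn F (p i * p j) * (∑ c, C j b c * B i c a)
         + 2⁻¹ * ∑ l, g l * C l b a) = 0) ∧
     (2⁻¹ * (∑ a, ∑ b, C i b a * A j a b)
         - sgn F (p i * p j) * (2⁻¹ * (∑ a, ∑ b, C j b a * A i a b)) + ∑ l, g l * d l) = 0) := by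
  have csg : ∀ e, sgn k e = c (sgn F e) := by intro e; unfold sgn; split_ifs <;> simp
  have hhf : c 2⁻¹ * 2 = 1 := by
    have : c (2⁻¹ * 2) = 1 := by rw [inv_mul_cancel₀ two_ne_zero, map_one]
    rwa [map_mul, map_ofNat] at this
  have hm : ∀ {M : ι → ι → F} {e}, HomP p M e → HomP p (fun a b => c (M a b)) e := by
    intro M e hM a b hab
    simp [hM a b hab]
  have hs : ∀ {M : ι → ι → F}, (∀ a b, M a b = sgn F (p a * p b) * M b a) →
      ∀ a b, c (M a b) = sgn k (p a * p b) * c (M b a) := by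
    intro M hM a b
    rw [hM a b, map_mul, csg]
  have T := r.T (h := h) hhf (i := i) (j := j) (A := fun i a b => c (A i a b))
    (B := fun i a b => c (B i a b)) (C := fun i a b => c (C i a b)) (d := fun i => c (d i))
    (f := fun l => c (g l)) (hm hA) (hm hA') (hm hB) (hm hB') (hm hC) (hm hC') (hs sA) (hs sA')
    (hs sC) (hs sC') (fun hp => by simp [hd hp]) (fun hp => by simp [hd' hp])
  have st : (∀ w, Lf i (Lf j w) - sgn k (p i * p j) • Lf j (Lf i w)
      = ∑ l, (if l = z then 0 else (h * c (f l)) • Lf l w)) ↔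
     Lgen X D h (c 2⁻¹) (fun a b => c (A i a b)) (fun a b => c (B i a b))
      (fun a b => c (C i a b)) (c (d i)) i * Lgen X D h (c 2⁻¹) (fun a b => c (A j a b)) (fun a b => c (B j a b))
      (fun a b => c (C j a b)) (c (d j)) j - sgn k (p i * p j) • (Lgen X D h (c 2⁻¹) (fun a b => c (A j a b)) (fun a b => c (B j a b))
      (fun a b => c (C j a b)) (c (d j)) j * Lgen X D h (c 2⁻¹) (fun a b => c (A i a b)) (fun a b => c (B i a b))
      (fun a b => c (C i a b)) (c (d i)) i) - ∑ l, (h * c (g l)) • Lgen X D h (c 2⁻¹) (fun a b => c (A l a b)) (fun a b => c (B l a b))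
      (fun a b => c (C l a b)) (c (d l)) l = 0 := by
    rw [LinearMap.ext_iff]
    refine forall_congr' fun w => ?_
    simp only [hL, LinearMap.sub_apply, Module.End.mul_apply, LinearMap.smul_apply,
      LinearMap.sum_apply, LinearMap.zero_apply]
    rw [sub_eq_zero (b := ∑ l, _)]
    have : ∀ l, (h * c (g l)) • (Lgen X D h (c 2⁻¹) (fun a b => c (A l a b)) (fun a b => c (B l a b))
      (fun a b => c (C l a b)) (c (d l)) l) w = if l = z then 0 else (h * c (f l)) • (Lgen X D h (c 2⁻¹) (fun a b => c (A l a b)) (fun a b => c (B l a b))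
      (fun a b => c (C l a b)) (c (d l)) l) w := by
      intro l
      rw [hg]
      split_ifs <;> simp
    simp only [this]
  rw [st, T]
  clear st T
  have zz : ∀ (n : ℕ) (x : F), h ^ n * c x = 0 ↔ x = 0 := by
    intro n x
    rw [mul_eq_zero, or_iff_right (pow_ne_zero n hh), map_eq_zero]
  have zz1 : ∀ (x : F), h * c x = 0 ↔ x = 0 := by
    intro x
    simpa using zz 1 x
  simp only [csg, ← map_mul, ← map_sum, ← map_sub, ← map_add]
  constructor
  · intro h0
    obtain ⟨h1, h2, h3, h4, h5, h6⟩ := NF_inj v φ r hv hD hX _ _ _ _ _ _ h0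
    simp only [zz1] at h1
    simp only [zz] at h2 h4 h6
    refine ⟨h1, h2, fun a b => ?_, h4, fun a b => ?_, h6⟩
    · have := h3 a b
      rw [csg, mul_left_comm, ← mul_add, ← map_mul, ← map_add, zz1] at this
      exact this
    · have := h5 a b
      rw [csg, mul_left_comm, ← mul_add, ← map_mul, ← map_add, zz] at this
      exact this
  · rintro ⟨h1, h2, h3, h4, h5, h6⟩
    refine NF_zero r hhf _ _ _ _ _ _ (fun a => (zz1 _).2 (h1 a)) (fun a => (zz _ _).2 (h2 a)) (fun a b => ?_)
      (fun a b => (zz _ _).2 (h4 a b)) (fun a b => ?_) ((zz _ _).2 h6)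
    · rw [csg, mul_left_comm, ← mul_add, ← map_mul, ← map_add, zz1]
      exact h3 a b
    · rw [csg, mul_left_comm, ← mul_add, ← map_mul, ← map_add, zz]
      exact h5 a b

end Key

section Tens
variable {k M N : Type} [CommRing k] [AddCommMonoid M] [AddCommMonoid N] [Module k M] [Module k N]
  {ι : Type} [DecidableEq ι] {p : ι → ZMod 2}

lemma rl_comm (f : Module.End k M) (g : Module.End k N) :
    (LinearMap.rTensor N f : Module.End k (M ⊗[k] N)) * LinearMap.lTensor M g
      = LinearMap.lTensor M g * LinearMap.rTensor N f := by
  rw [Module.End.mul_eq_comp, Module.End.mul_eq_comp, LinearMap.rTensor_comp_lTensor,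
    LinearMap.lTensor_comp_rTensor]

def tOp (f : {a // p a = 0} → Module.End k M) (g : {a // p a = 1} → Module.End k N) (a : ι) :
    Module.End k (M ⊗[k] N) :=
  if h : p a = 0 then LinearMap.rTensor N (f ⟨a, h⟩) else LinearMap.lTensor M (g ⟨a, zmod2_eq_one h⟩)

lemma tOp_rel (f f' : {a // p a = 0} → Module.End k M) (g g' : {a // p a = 1} → Module.End k N) (t : k)
    (hf : ∀ a b, f a * f' b = (if a = b then t else 0) • (1 : Module.End k M) + f' b * f a)
    (hg : ∀ a b, g a * g' b = (if a = b then t else 0) • (1 : Module.End k N) + (-1 : k) • (g' b * g a))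
    (a b : ι) :
    tOp f g a * tOp f' g' b = (if a = b then t else 0) • (1 : Module.End k (M ⊗[k] N))
      + sgn k (p a * p b) • (tOp f' g' b * tOp f g a) := by
  have s1 : sgn k (1 * 1) = -1 := by simp [sgn]
  have s0 : sgn k 0 = 1 := by simp [sgn]
  by_cases ha : p a = 0 <;> by_cases hb : p b = 0
  · simp only [tOp, ha, hb, dif_pos, mul_zero, s0, one_smul, ← LinearMap.rTensor_mul]
    rw [hf, LinearMap.rTensor_add, LinearMap.rTensor_smul]
    simp only [Subtype.mk.injEq]
    congr 2
    exact LinearMap.rTensor_id _ _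
  · have : a ≠ b := by rintro rfl; exact hb ha
    simp only [tOp, ha, hb, dif_pos, dif_neg, not_false_iff, zero_mul, s0, one_smul, this, if_false,
      zero_smul, zero_add]
    exact rl_comm _ _
  · have : a ≠ b := by rintro rfl; exact ha hb
    simp only [tOp, ha, hb, dif_pos, dif_neg, not_false_iff, mul_zero, s0, one_smul, this, if_false,
      zero_smul, zero_add]
    exact (rl_comm _ _).symm
  · rw [zmod2_eq_one ha, zmod2_eq_one hb, s1]
    simp only [tOp, ha, hb, dif_neg, not_false_iff, ← LinearMap.lTensor_mul]
    rw [hg, LinearMap.lTensor_add, LinearMap.lTensor_smul, LinearMap.lTensor_smul]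
    simp only [Subtype.mk.injEq]
    congr 2
    exact LinearMap.lTensor_id _ _
end Tens

end Abs

section Conc

/-- An additive group structure on the carrier, on top of its standard additive monoid. -/
@[reducible] def sACG : AddCommGroup (SuperSpace K d p) :=
  { (inferInstance : AddCommMonoid (SuperSpace K d p)) with
    neg := fun x => -x
    sub := fun x y => x - y
    sub_eq_add_neg := fun x y => sub_eq_add_neg x y
    zsmul := fun n x => zsmulRec nsmulRec n x
    zsmul_zero' := fun _ => rfl
    zsmul_succ' := fun _ _ => rfl
    zsmul_neg' := fun _ _ => rfl
    neg_add_cancel := fun x => neg_add_cancel x }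

def xe (a : {a : Fin (d + 1) // p a = 0}) : Module.End (R K) (Pev K d p) :=
  LinearMap.mulLeft (R K) (MvPolynomial.X a)
def xo (a : {a : Fin (d + 1) // p a = 1}) : Module.End (R K) (Podd K d p) :=
  LinearMap.mulLeft (R K) (ExteriorAlgebra.ι (R K) (Finsupp.single a 1))
def de (a : {a : Fin (d + 1) // p a = 0}) : Module.End (R K) (Pev K d p) :=
  (MvPolynomial.pderiv a).toLinearMap
def dodd (a : {a : Fin (d + 1) // p a = 1}) : Module.End (R K) (Podd K d p) :=
  CliffordAlgebra.contractLeft (Finsupp.lapply a)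

def xopL : Fin (d + 1) → Module.End (R K) (SuperSpace K d p) := tOp (xe K d p) (xo K d p)
def dopL : Fin (d + 1) → Module.End (R K) (SuperSpace K d p) := tOp (de K d p) (dodd K d p)

lemma xop_eq (a : Fin (d + 1)) : xop K d p a = ⇑(xopL K d p a) := by
  unfold xop xopL tOp; split_ifs <;> rfl

lemma dop_eq (a : Fin (d + 1)) : dop K d p a = ⇑(dopL K d p a) := by
  unfold dop dopL tOp; split_ifs <;> rfl

lemma e_xx (a b) : xe K d p a * xe K d p b =
    (if a = b then 0 else 0 : R K) • (1 : Module.End (R K) (Pev K d p)) + xe K d p b * xe K d p a := by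
  rw [ite_self, zero_smul, zero_add]
  refine LinearMap.ext fun x => ?_
  exact mul_left_comm (MvPolynomial.X a) (MvPolynomial.X b) x

lemma pd_comm {k σ : Type} [CommRing k] (a b : σ) (x : MvPolynomial σ k) :
    MvPolynomial.pderiv a (MvPolynomial.pderiv b x)
      = MvPolynomial.pderiv b (MvPolynomial.pderiv a x) := by
  classical
  have h : ⁅(MvPolynomial.pderiv a : Derivation k (MvPolynomial σ k) (MvPolynomial σ k)),
      (MvPolynomial.pderiv b : Derivation k (MvPolynomial σ k) (MvPolynomial σ k))⁆ = 0 := by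
    refine MvPolynomial.derivation_ext fun i => ?_
    have hz : ∀ (s t : σ), MvPolynomial.pderiv s
        ((Pi.single t 1 : σ → MvPolynomial σ k) i) = 0 := by
      intro s t
      rw [Pi.single_apply]
      split_ifs
      · exact Derivation.map_one_eq_zero _
      · exact map_zero _
    rw [Derivation.commutator_apply, MvPolynomial.pderiv_X, MvPolynomial.pderiv_X, hz, hz,
      sub_zero]
    rfl
  have := congrArg (fun δ => δ x) h
  simp only [Derivation.commutator_apply, Derivation.zero_apply] at this
  exact sub_eq_zero.1 this

lemma pd_X_mul {k σ : Type} [CommRing k] [DecidableEq σ] (a b : σ) (x : MvPolynomial σ k) :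
    MvPolynomial.pderiv a (MvPolynomial.X b * x)
      = (if a = b then 1 else 0 : k) • x + MvPolynomial.X b * MvPolynomial.pderiv a x := by
  rw [Derivation.leibniz, MvPolynomial.pderiv_X, add_comm]
  by_cases h : a = b
  · subst h; simp
  · simp [h]

lemma e_dd (a b) : de K d p a * de K d p b =
    (if a = b then 0 else 0 : R K) • (1 : Module.End (R K) (Pev K d p)) + de K d p b * de K d p a := by
  rw [ite_self, zero_smul, zero_add]
  exact LinearMap.ext fun x => pd_comm a b x

lemma e_dx (a b) : de K d p a * xe K d p b =
    (if a = b then 1 else 0 : R K) • (1 : Module.End (R K) (Pev K d p)) + xe K d p b * de K d p a := by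
  exact LinearMap.ext fun x => pd_X_mul a b x

lemma o_xx (a b) : xo K d p a * xo K d p b =
    (if a = b then 0 else 0 : R K) • (1 : Module.End (R K) (Podd K d p))
      + (-1 : R K) • (xo K d p b * xo K d p a) := by
  rw [ite_self, zero_smul, zero_add]
  refine LinearMap.ext fun x => ?_
  have := ExteriorAlgebra.ι_add_mul_swap (R := R K) (Finsupp.single a (1 : R K)) (Finsupp.single b (1 : R K))
  change ExteriorAlgebra.ι (R K) (Finsupp.single a 1) * (ExteriorAlgebra.ι (R K) (Finsupp.single b 1) * x)
    = (-1 : R K) • (ExteriorAlgebra.ι (R K) (Finsupp.single b 1) * (ExteriorAlgebra.ι (R K) (Finsupp.single a 1) * x))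
  rw [← mul_assoc, ← mul_assoc, eq_neg_of_add_eq_zero_left this, neg_smul, one_smul, neg_mul]

lemma o_dd (a b) : dodd K d p a * dodd K d p b =
    (if a = b then 0 else 0 : R K) • (1 : Module.End (R K) (Podd K d p))
      + (-1 : R K) • (dodd K d p b * dodd K d p a) := by
  rw [ite_self, zero_smul, zero_add]
  refine LinearMap.ext fun x => ?_
  refine Eq.trans (CliffordAlgebra.contractLeft_comm _ _ _) ?_
  rw [LinearMap.smul_apply, neg_smul, one_smul]
  rfl

lemma o_dx (a b) : dodd K d p a * xo K d p b =
    (if a = b then 1 else 0 : R K) • (1 : Module.End (R K) (Podd K d p))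
      + (-1 : R K) • (xo K d p b * dodd K d p a) := by
  refine LinearMap.ext fun x => ?_
  refine Eq.trans (CliffordAlgebra.contractLeft_ι_mul _ _ _) ?_
  rw [LinearMap.add_apply, LinearMap.smul_apply, LinearMap.smul_apply, neg_smul, one_smul, sub_eq_add_neg]
  congr 1
  rw [Finsupp.lapply_apply, Finsupp.single_apply]
  simp only [eq_comm (a := b)]
  rfl

lemma conc_rel : SWRel p (R K) (xopL K d p) (dopL K d p) where
  xx a b := by
    have := tOp_rel _ _ _ _ 0 (e_xx K d p) (o_xx K d p) a b
    rwa [ite_self, zero_smul, zero_add] at this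
  dd a b := by
    have := tOp_rel _ _ _ _ 0 (e_dd K d p) (o_dd K d p) a b
    rwa [ite_self, zero_smul, zero_add] at this
  dx a b := tOp_rel _ _ _ _ 1 (e_dx K d p) (o_dx K d p) a b

def vac : SuperSpace K d p := 1 ⊗ₜ 1
def phi : SuperSpace K d p →ₗ[R K] R K :=
  (TensorProduct.lid (R K) (R K)).toLinearMap ∘ₗ
    TensorProduct.map (MvPolynomial.aeval (fun _ => (0 : R K))).toLinearMap
      (ExteriorAlgebra.algebraMapInv).toLinearMap

lemma phi_vac : phi K d p (vac K d p) = 1 := by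
  simp [phi, vac]

lemma dop_vac (a : Fin (d + 1)) : dopL K d p a (vac K d p) = 0 := by
  unfold dopL vac tOp de dodd
  split_ifs
  · simp
  · simp

lemma phi_xop (a : Fin (d + 1)) (w : SuperSpace K d p) : phi K d p (xopL K d p a w) = 0 := by
  unfold xopL phi tOp xe xo
  induction w using TensorProduct.induction_on with
  | zero => simp
  | add x y hx hy => rw [map_add, map_add, hx, hy, add_zero]
  | tmul x y =>
    split_ifs
    · simp
    · simp [ExteriorAlgebra.algebraMapInv]

lemma Lop_eq (A B C : Fin (d + 1) → Fin (d + 1) → Fin (d + 1) → K) (D : Fin (d + 1) → K)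
    (i : Fin (d + 1)) (v : SuperSpace K d p) :
    Lop K d p A B C D i v =
     letI := sACG K d p
     Lgen (xopL K d p) (dopL K d p) (hb K) (cs K 2⁻¹)
      (fun a b => cs K (A i a b)) (fun a b => cs K (B i a b)) (fun a b => cs K (C i a b))
      (cs K (D i)) i v := by
  let _ := sACG K d p
  have hm : ∀ x y, cs K (x * y) = cs K x * cs K y := fun x y => Polynomial.C_mul
  have := Lgen_apply (X := xopL K d p) (D := dopL K d p) (hb K) (cs K 2⁻¹)
      (fun a b => cs K (A i a b)) (fun a b => cs K (2⁻¹ * A i a b)) (fun a b => cs K (B i a b))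
      (fun a b => cs K (C i a b)) (fun a b => cs K (2⁻¹ * C i a b))
      (cs K (D i)) i v (fun _ _ => hm _ _) (fun _ _ => hm _ _)
  refine Eq.trans ?_ this
  unfold Lop
  simp only [xop_eq, dop_eq]
end Conc

section Fin
variable {K d p}

lemma gsum (s : K) (b b' g M : Fin (d + 1) → K)
    (hg : ∀ l, g l = if l = 0 then 0 else s * b l - b' l) :
    ∑ l, g l * M l = s * (∑ k, if k = 0 then 0 else b k * M k)
      - ∑ k, if k = 0 then 0 else b' k * M k := by
  rw [Finset.mul_sum, ← Finset.sum_sub_distrib]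
  refine Finset.sum_congr rfl fun l _ => ?_
  rw [hg]
  split_ifs <;> ring

lemma gsym (s : K) (g M M' : Fin (d + 1) → K) (hg : g 0 = 0)
    (hM : ∀ l, l ≠ 0 → M l = s * M' l) :
    s * ∑ l, g l * M' l = ∑ l, g l * M l := by
  rw [Finset.mul_sum]
  refine Finset.sum_congr rfl fun l _ => ?_
  by_cases h : l = 0
  · subst h; rw [hg]; ring
  · rw [hM l h]; ring

lemma pair (A B C : Fin (d + 1) → Fin (d + 1) → Fin (d + 1) → K) (D : Fin (d + 1) → K)
    (f : Fin (d + 1) → K) (i j : Fin (d + 1))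
    (hAsym : ∀ i a b, i ≠ 0 → A i a b = sg K (p a * p b) * A i b a)
    (hCsym : ∀ i a b, i ≠ 0 → C i a b = sg K (p a * p b) * C i b a)
    (g : Fin (d + 1) → K) (hg : ∀ l, g l = if l = 0 then 0 else f l) :
    ((∀ a, sg K (p i * p j) * A i j a - A j i a = 0) ∧
     (∀ a, sg K (p i * p j) * B i j a - B j i a - g a = 0) ∧
     (∀ a b, ((∑ c, B i a c * A j c b) - sg K (p i * p j) * (∑ c, B j a c * A i c b)
         + 2⁻¹ * ∑ l, g l * A l a b) +
       sg K (p a * p b) * ((∑ c, B i b c * A j c a) - sg K (p i * p j) * (∑ c, B j b c * A i c a)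
         + 2⁻¹ * ∑ l, g l * A l b a) = 0) ∧
     (∀ a b, (∑ c, B i a c * B j c b) + sg K (p a * p b) * (∑ c, C i b c * A j c a)
         - sg K (p i * p j) * ((∑ c, B j a c * B i c b)
            + sg K (p a * p b) * (∑ c, C j b c * A i c a))
         + ∑ l, g l * B l a b = 0) ∧
     (∀ a b, ((∑ c, C i a c * B j c b) - sg K (p i * p j) * (∑ c, C j a c * B i c b)
         + 2⁻¹ * ∑ l, g l * C l a b) +
       sg K (p a * p b) * ((∑ c, C i b c * B j c a) - sg K (p i * p j) * (∑ c, C j b c * B i c a)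
         + 2⁻¹ * ∑ l, g l * C l b a) = 0) ∧
     (2⁻¹ * (∑ a, ∑ b, C i b a * A j a b)
         - sg K (p i * p j) * (2⁻¹ * (∑ a, ∑ b, C j b a * A i a b)) + ∑ l, g l * D l) = 0) ↔
    ((∀ a, A j i a = sg K (p i * p j) * A i j a) ∧
     (∀ k, k ≠ 0 → f k = sg K (p i * p j) * B i j k - B j i k) ∧
     (sg K (p i * p j) * B i j 0 = B j i 0) ∧
     (∀ a b, lhsBA K d p A B i j a b = sg K (p i * p j) * lhsBA K d p A B j i a b) ∧
     (∀ a b, lhsBBCA K d p A B C i j a b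
          = sg K (p i * p j) * lhsBBCA K d p A B C j i a b) ∧
     (∀ a b, lhsCB K d p B C i j a b = sg K (p i * p j) * lhsCB K d p B C j i a b) ∧
     (lhsCABD K d p A B C D i j = sg K (p i * p j) * lhsCABD K d p A B C D j i)) := by
  have hs2 : sg K (p i * p j) * sg K (p i * p j) = 1 := by
    unfold sg; split_ifs <;> ring
  have hc : p j * p i = p i * p j := mul_comm _ _
  have hg0 : g 0 = 0 := by rw [hg, if_pos rfl]
  have gA := fun a b => gsym (sg K (p a * p b)) g (fun l => A l a b) (fun l => A l b a) hg0
    (fun l hl => hAsym l a b hl)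
  have gC := fun a b => gsym (sg K (p a * p b)) g (fun l => C l a b) (fun l => C l b a) hg0
    (fun l hl => hCsym l a b hl)
  unfold lhsBA lhsBBCA lhsCB lhsCABD
  rw [hc]
  generalize hss : sg K (p i * p j) = s at *
  simp only [Finset.sum_add_distrib, ← Finset.mul_sum]
  have h2 : (2 : K)⁻¹ * 2 = 1 := inv_mul_cancel₀ two_ne_zero
  have main : (∀ l, g l = if l = 0 then 0 else s * B i j l - B j i l) →
     (((∀ a b, ((∑ c, B i a c * A j c b) - s * (∑ c, B j a c * A i c b)
         + 2⁻¹ * ∑ l, g l * A l a b) +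
       sg K (p a * p b) * ((∑ c, B i b c * A j c a) - s * (∑ c, B j b c * A i c a)
         + 2⁻¹ * ∑ l, g l * A l b a) = 0) ∧
     (∀ a b, (∑ c, B i a c * B j c b) + sg K (p a * p b) * (∑ c, C i b c * A j c a)
         - s * ((∑ c, B j a c * B i c b)
            + sg K (p a * p b) * (∑ c, C j b c * A i c a))
         + ∑ l, g l * B l a b = 0) ∧
     (∀ a b, ((∑ c, C i a c * B j c b) - s * (∑ c, C j a c * B i c b)
         + 2⁻¹ * ∑ l, g l * C l a b) +
       sg K (p a * p b) * ((∑ c, C i b c * B j c a) - s * (∑ c, C j b c * B i c a)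
         + 2⁻¹ * ∑ l, g l * C l b a) = 0) ∧
     (2⁻¹ * (∑ a, ∑ b, C i b a * A j a b)
         - s * (2⁻¹ * (∑ a, ∑ b, C j b a * A i a b)) + ∑ l, g l * D l) = 0) ↔
     ((∀ a b, ∑ c, B i a c * A j c b + sg K (p a * p b) * ∑ c, B i b c * A j c a
        + s * (∑ k, if k = 0 then 0 else B i j k * A k a b)
        = s * (∑ c, B j a c * A i c b + sg K (p a * p b) * ∑ c, B j b c * A i c a
        + s * (∑ k, if k = 0 then 0 else B j i k * A k a b))) ∧
      (∀ a b, ∑ c, B i a c * B j c b + sg K (p a * p b) * ∑ c, C i b c * A j c a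
        + s * (∑ k, if k = 0 then 0 else B i j k * B k a b)
        = s * (∑ c, B j a c * B i c b + sg K (p a * p b) * ∑ c, C j b c * A i c a
        + s * (∑ k, if k = 0 then 0 else B j i k * B k a b))) ∧
      (∀ a b, ∑ c, C i a c * B j c b + sg K (p a * p b) * ∑ c, C i b c * B j c a
        + s * (∑ k, if k = 0 then 0 else B i j k * C k a b)
        = s * (∑ c, C j a c * B i c b + sg K (p a * p b) * ∑ c, C j b c * B i c a
        + s * (∑ k, if k = 0 then 0 else B j i k * C k a b))) ∧
      (2⁻¹ * (∑ a, ∑ b, C i b a * A j a b) + s * (∑ k, if k = 0 then 0 else B i j k * D k)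
        = s * (2⁻¹ * (∑ a, ∑ b, C j b a * A i a b)
          + s * (∑ k, if k = 0 then 0 else B j i k * D k))))) := by
    intro hgg
    have gs := fun M => gsum s (B i j) (B j i) g M hgg
    refine and_congr (forall_congr' fun a => forall_congr' fun b => ?_)
      (and_congr (forall_congr' fun a => forall_congr' fun b => ?_)
      (and_congr (forall_congr' fun a => forall_congr' fun b => ?_) ?_))
    · rw [← sub_eq_zero (b := s * _)]
      refine Eq.congr ?_ rfl
      have e1 := gs (fun l => A l a b)
      have e2 := gA a b
      linear_combination (2⁻¹ : K) * e2 + (2 : K)⁻¹ * 2 * e1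
        + (s * (∑ k, if k = 0 then 0 else B i j k * A k a b)
      - ∑ k, if k = 0 then 0 else B j i k * A k a b) * h2
        + (∑ k, if k = 0 then 0 else B j i k * A k a b) * hs2
    · rw [← sub_eq_zero (b := s * _)]
      refine Eq.congr ?_ rfl
      have e1 := gs (fun l => B l a b)
      linear_combination e1 + (∑ k, if k = 0 then 0 else B j i k * B k a b) * hs2
    · rw [← sub_eq_zero (b := s * _)]
      refine Eq.congr ?_ rfl
      have e1 := gs (fun l => C l a b)
      have e2 := gC a b
      linear_combination (2⁻¹ : K) * e2 + (2 : K)⁻¹ * 2 * e1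
        + (s * (∑ k, if k = 0 then 0 else B i j k * C k a b)
      - ∑ k, if k = 0 then 0 else B j i k * C k a b) * h2
        + (∑ k, if k = 0 then 0 else B j i k * C k a b) * hs2
    · rw [← sub_eq_zero (b := s * _)]
      refine Eq.congr ?_ rfl
      have e1 := gs D
      linear_combination e1 + (∑ k, if k = 0 then 0 else B j i k * D k) * hs2
  constructor
  · rintro ⟨h1, hb, h3⟩
    have hgg : ∀ l, g l = if l = 0 then 0 else s * B i j l - B j i l := by
      intro l
      by_cases hl : l = 0
      · rw [if_pos hl, hl, hg0]
      · rw [if_neg hl]; exact (sub_eq_zero.1 (hb l)).symm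
    refine ⟨fun a => (sub_eq_zero.1 (h1 a)).symm, fun k hk => ?_, ?_, (main hgg).1 h3⟩
    · have := hb k
      rw [hg, if_neg hk] at this
      exact (sub_eq_zero.1 this).symm
    · have := hb 0
      rw [hg0, sub_zero] at this
      exact sub_eq_zero.1 this
  · rintro ⟨h1, hf, h0, h3⟩
    have hgg : ∀ l, g l = if l = 0 then 0 else s * B i j l - B j i l := by
      intro l
      rw [hg]
      by_cases hl : l = 0
      · rw [if_pos hl, if_pos hl]
      · rw [if_neg hl, if_neg hl]; exact hf l hl
    refine ⟨fun a => sub_eq_zero.2 (h1 a).symm, fun a => ?_, (main hgg).2 h3⟩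
    rw [hgg]
    by_cases ha : a = 0
    · rw [if_pos ha, ha, h0, sub_self, sub_zero]
    · rw [if_neg ha, sub_self]

end Fin

/-- Under the evenness and symmetry assumptions on the tensors
`A, B, C, D`, the supercommutation relations `[L_i, L_j] = ℏ Σ_{k∈I} f_{ij}^k L_k`
(`i, j ∈ I`) hold if and only if the constraints (A), (f), (BA), (BB−CA), (CB) and
(CA−BD) of a quadratic super quantum Airy structure are all satisfied. -/
theorem statement1 (hd : 1 ≤ d) (hp0 : p 0 = 1)
    (A B C : Fin (d + 1) → Fin (d + 1) → Fin (d + 1) → K) (D : Fin (d + 1) → K)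
    (f : Fin (d + 1) → Fin (d + 1) → Fin (d + 1) → K)
    (hA0 : ∀ i a b, i ≠ 0 → p i + p a + p b ≠ 0 → A i a b = 0)
    (hB0 : ∀ i a b, i ≠ 0 → p i + p a + p b ≠ 0 → B i a b = 0)
    (hC0 : ∀ i a b, i ≠ 0 → p i + p a + p b ≠ 0 → C i a b = 0)
    (hD0 : ∀ i, i ≠ 0 → p i ≠ 0 → D i = 0)
    (hAsym : ∀ i a b, i ≠ 0 → A i a b = sg K (p a * p b) * A i b a)
    (hCsym : ∀ i a b, i ≠ 0 → C i a b = sg K (p a * p b) * C i b a) :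
    (∀ i j : Fin (d + 1), i ≠ 0 → j ≠ 0 → ∀ v : SuperSpace K d p,
        Lop K d p A B C D i (Lop K d p A B C D j v)
            - sgR K (p i * p j) • Lop K d p A B C D j (Lop K d p A B C D i v)
          = ∑ k : Fin (d + 1),
              (if k = 0 then 0 else (hb K * cs K (f i j k)) • Lop K d p A B C D k v))
      ↔
    ((∀ i j a, i ≠ 0 → j ≠ 0 → A j i a = sg K (p i * p j) * A i j a) ∧
     (∀ i j k, i ≠ 0 → j ≠ 0 → k ≠ 0 →
        f i j k = sg K (p i * p j) * B i j k - B j i k) ∧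
     (∀ i j, i ≠ 0 → j ≠ 0 → sg K (p i * p j) * B i j 0 = B j i 0) ∧
     (∀ i j a b, i ≠ 0 → j ≠ 0 →
        lhsBA K d p A B i j a b = sg K (p i * p j) * lhsBA K d p A B j i a b) ∧
     (∀ i j a b, i ≠ 0 → j ≠ 0 →
        lhsBBCA K d p A B C i j a b
          = sg K (p i * p j) * lhsBBCA K d p A B C j i a b) ∧
     (∀ i j a b, i ≠ 0 → j ≠ 0 →
        lhsCB K d p B C i j a b = sg K (p i * p j) * lhsCB K d p B C j i a b) ∧
     (∀ i j, i ≠ 0 → j ≠ 0 →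
        lhsCABD K d p A B C D i j = sg K (p i * p j) * lhsCABD K d p A B C D j i)) := by
  have hpair : ∀ i j : Fin (d + 1), i ≠ 0 → j ≠ 0 →
      ((∀ v : SuperSpace K d p,
        Lop K d p A B C D i (Lop K d p A B C D j v)
            - sgR K (p i * p j) • Lop K d p A B C D j (Lop K d p A B C D i v)
          = ∑ k : Fin (d + 1),
              (if k = 0 then 0 else (hb K * cs K (f i j k)) • Lop K d p A B C D k v)) ↔ _) :=
    fun i j hi hj => Iff.trans
      (@key _ _ _ _ _ _ (SuperSpace K d p) (sACG K d p) _ (xopL K d p) (dopL K d p) K _ _ _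
        (Polynomial.C : K →+* R K) (vac K d p) (phi K d p) (conc_rel K d p) (phi_vac K d p)
        (dop_vac K d p) (phi_xop K d p) (hb K) Polynomial.X_ne_zero i j A B C D (f i j) 0
        (Lop K d p A B C D) (Lop_eq K d p A B C D)
        (fun a b => hA0 i a b hi) (fun a b => hA0 j a b hj)
        (fun a b => hB0 i a b hi) (fun a b => hB0 j a b hj)
        (fun a b => hC0 i a b hi) (fun a b => hC0 j a b hj)
        (fun a b => hAsym i a b hi) (fun a b => hAsym j a b hj)
        (fun a b => hCsym i a b hi) (fun a b => hCsym j a b hj)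
        (hD0 i hi) (hD0 j hj) (fun l => if l = 0 then 0 else f i j l) (fun _ => rfl))
      (pair A B C D (f i j) i j hAsym hCsym (fun l => if l = 0 then 0 else f i j l)
        (fun _ => rfl))
  constructor
  · intro H
    have H' := fun i j hi hj => (hpair i j hi hj).1 (H i j hi hj)
    exact ⟨fun i j a hi hj => (H' i j hi hj).1 a, fun i j k hi hj => (H' i j hi hj).2.1 k,
      fun i j hi hj => (H' i j hi hj).2.2.1, fun i j a b hi hj => (H' i j hi hj).2.2.2.1 a b,
      fun i j a b hi hj => (H' i j hi hj).2.2.2.2.1 a b,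
      fun i j a b hi hj => (H' i j hi hj).2.2.2.2.2.1 a b,
      fun i j hi hj => (H' i j hi hj).2.2.2.2.2.2⟩
  · rintro ⟨h1, h2, h3, h4, h5, h6, h7⟩ i j hi hj
    exact (hpair i j hi hj).2 ⟨fun a => h1 i j a hi hj, fun k => h2 i j k hi hj, h3 i j hi hj,
      fun a b => h4 i j a b hi hj, fun a b => h5 i j a b hi hj, fun a b => h6 i j a b hi hj,
      h7 i j hi hj⟩

end
end

section
/- Fix an integer N ≥ −1 and scalars D_1, …, D_{N+1} ∈ K. For each integer i ≥ 1 define the R-linear endomorphism of P (the polynomial ring over R = K[ℏ] in the variables x^1, x^2, x^3, …): H_i = ℏ ∂_i + (ℏ²/2) Σ_{k,l ≥ 1, k+l = i+N−1} ∂_k ∂_l + ℏ Σ_{m ≥ 1, m+i+N−1 ≥ 1} m x^m ∂_{m+i+N−1} + ℏ D_i [i ≤ N+1]. (These are the operators of the momentum-zero untwisted free-boson representation, i.e. with bosonic zero mode b_0 = 0; they coincide with the quantum Airy structure produced by the 'topological recursion without branched covers' on the spectral curve Σ = P¹, ω_{0,1} = −dz/z^N, ω_{0,2} = dz_1 dz_2/(z_1−z_2)²,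 ω_{1,1} = −Σ_{k=1}^{N+1} D_k dz/z^{k+1}.) Then for all integers i, j ≥ 1: [H_i, H_j] = ℏ (i − j) H_{i+j+N−1}. -/
/-!
Statement 5: the momentum-zero untwisted free-boson operators
`H_i = ℏ ∂_i + (ℏ²/2) Σ_{k,l≥1, k+l=i+N−1} ∂_k ∂_l
       + ℏ Σ_{m≥1, m+i+N−1≥1} m x^m ∂_{m+i+N−1} + ℏ D_i [i ≤ N+1]`
acting on `P = K[ℏ][x¹, x², x³, …]` satisfy `[H_i, H_j] = ℏ (i−j) H_{i+j+N−1}`.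
-/

noncomputable section

open MvPolynomial

/-- The carrier: polynomials over `R = K[ℏ]` in variables `x^1, x^2, x^3, …`. -/
abbrev BosonSpace (K : Type) [Field K] := MvPolynomial ℕ+ (Polynomial K)

variable (K : Type) [Field K] [CharZero K]

/-- `ℏ`, as an element of `P` (acting by multiplication). -/
def hbar : BosonSpace K := MvPolynomial.C Polynomial.X

/-- `∂_a` for `a ∈ ℤ`, with the convention that it vanishes for `a < 1`. -/
def Dop (a : ℤ) (p : BosonSpace K) : BosonSpace K :=
  if h : 1 ≤ a then MvPolynomial.pderiv (⟨a.toNat, by omega⟩ : ℕ+) p else 0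

/-- Multiplication by `x^a` for `a ∈ ℤ`, with the convention that it vanishes for `a < 1`. -/
def Xop (a : ℤ) (p : BosonSpace K) : BosonSpace K :=
  if h : 1 ≤ a then (MvPolynomial.X (⟨a.toNat, by omega⟩ : ℕ+) : BosonSpace K) * p else 0

/-- The operator
`H_i = ℏ ∂_i + (ℏ²/2) Σ_{k,l≥1, k+l=i+N−1} ∂_k ∂_l
       + ℏ Σ_{m≥1, m+i+N−1≥1} m x^m ∂_{m+i+N−1} + ℏ D_i [i ≤ N+1]`. -/
def Hop (N : ℤ) (D : ℤ → K) (i : ℤ) (p : BosonSpace K) : BosonSpace K :=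
  hbar K * Dop K i p
    + MvPolynomial.C (Polynomial.C ((2 : K)⁻¹)) * hbar K ^ 2 *
        (∑ᶠ k : ℤ, Dop K k (Dop K (i + N - 1 - k) p))
    + hbar K * (∑ᶠ m : ℤ, (m : BosonSpace K) * Xop K m (Dop K (m + i + N - 1) p))
    + (if i ≤ N + 1 then hbar K * MvPolynomial.C (Polynomial.C (D i)) * p else 0)

/-- bundled `∂_a`. -/
def dD (a : ℤ) : Derivation (Polynomial K) (BosonSpace K) (BosonSpace K) :=
  if h : 1 ≤ a then MvPolynomial.pderiv (⟨a.toNat, by omega⟩ : ℕ+) else 0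

/-- the variable `x^a`, zero if `a < 1`. -/
def xX (a : ℤ) : BosonSpace K :=
  if h : 1 ≤ a then (MvPolynomial.X (⟨a.toNat, by omega⟩ : ℕ+) : BosonSpace K) else 0

/-- the derivation `Σ m x^m ∂_{m+n}`. -/
def eE (n : ℤ) : Derivation (Polynomial K) (BosonSpace K) (BosonSpace K) :=
  MvPolynomial.mkDerivation (Polynomial K) (fun a : ℕ+ => ((a : ℤ) - n) • xX K ((a : ℤ) - n))

/-- the quadratic part. -/
def qQ (n : ℤ) : BosonSpace K →ₗ[Polynomial K] BosonSpace K :=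
  ∑ k ∈ Finset.Icc 1 n, (dD K k).toLinearMap ∘ₗ (dD K (n - k)).toLinearMap

theorem Dop_eq (a : ℤ) (p : BosonSpace K) : Dop K a p = dD K a p := by
  by_cases h : 1 ≤ a
  · have e : dD K a = MvPolynomial.pderiv (⟨a.toNat, by omega⟩ : ℕ+) := dif_pos h
    rw [e]
    exact dif_pos h
  · have e : dD K a = 0 := dif_neg h
    rw [e]
    exact dif_neg h

theorem Xop_eq (a : ℤ) (p : BosonSpace K) : Xop K a p = xX K a * p := by
  unfold Xop xX; split_ifs <;> simp

theorem dD_of_le (a : ℤ) (h : a ≤ 0) : dD K a = 0 := by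
  unfold dD; rw [dif_neg (by omega)]

theorem dD_X (a : ℤ) (b : ℕ+) :
    dD K a (MvPolynomial.X b) = if a = (b : ℤ) then 1 else 0 := by
  have hb := b.pos
  unfold dD
  split_ifs with h1 h2 h2
  · have : (⟨a.toNat, by omega⟩ : ℕ+) = b := by
      apply PNat.eq; simp [h2]
    rw [this]; simp
  · apply MvPolynomial.pderiv_X_of_ne
    rintro rfl
    apply h2
    simp; omega
  · omega
  · simp

theorem xX_coe (b : ℕ+) : xX K (b : ℤ) = MvPolynomial.X b := by
  have hb := b.pos
  unfold xX
  rw [dif_pos (by omega)]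
  congr 1

theorem xX_of_le (a : ℤ) (h : a ≤ 0) : xX K a = 0 := by
  unfold xX; rw [dif_neg (by omega)]

theorem exists_pnat (a : ℤ) (h : 1 ≤ a) : ∃ b : ℕ+, a = (b : ℤ) :=
  ⟨⟨a.toNat, by omega⟩, by simp; omega⟩

theorem dD_xX (a z : ℤ) : dD K a (xX K z) = if a = z ∧ 1 ≤ z then 1 else 0 := by
  by_cases h : 1 ≤ z
  · obtain ⟨b, rfl⟩ := exists_pnat z h
    rw [xX_coe, dD_X]; simp [h]
  · rw [xX_of_le K z (by omega)]; simp [h]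

theorem eE_X (n : ℤ) (b : ℕ+) :
    eE K n (MvPolynomial.X b) = ((b : ℤ) - n) • xX K ((b : ℤ) - n) := by
  unfold eE; rw [MvPolynomial.mkDerivation_X]

theorem eE_xX (n z : ℤ) :
    eE K n (xX K z) = if 1 ≤ z then (z - n) • xX K (z - n) else 0 := by
  split_ifs with h
  · obtain ⟨b, rfl⟩ := exists_pnat z h
    rw [xX_coe, eE_X]
  · rw [xX_of_le K z (by omega)]; simp

theorem dD_comm (a b : ℤ) (p : BosonSpace K) :
    dD K a (dD K b p) = dD K b (dD K a p) := by
  have h : ⁅dD K a, dD K b⁆ = 0 := by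
    apply MvPolynomial.derivation_ext
    intro i
    rw [Derivation.commutator_apply, dD_X, dD_X]
    split_ifs <;> simp
  have := congrArg (fun D => D p) h
  simp only [Derivation.commutator_apply] at this
  exact sub_eq_zero.mp this

theorem dD_eE (a n : ℤ) (p : BosonSpace K) :
    dD K a (eE K n p) = eE K n (dD K a p) + (max a 0) • dD K (a + n) p := by
  have h : ⁅dD K a, eE K n⁆ = (max a 0) • dD K (a + n) := by
    apply MvPolynomial.derivation_ext
    intro i
    have hi := i.pos
    rw [Derivation.commutator_apply, dD_X, eE_X, Derivation.smul_apply, dD_X, map_zsmul, dD_xX]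
    have : eE K n (if a = (i : ℤ) then 1 else 0) = 0 := by split_ifs <;> simp
    rw [this, sub_zero]
    by_cases h1 : a = (i : ℤ) - n
    · subst h1
      by_cases h2 : 1 ≤ (i : ℤ) - n
      · rw [if_pos ⟨rfl, h2⟩, if_pos (by ring), max_eq_left (by omega)]
      · rw [if_neg (by tauto), max_eq_right (by omega)]; simp
    · rw [if_neg (by tauto), if_neg (by omega)]; simp
  have := congrArg (fun D => D p) h
  simp only [Derivation.commutator_apply] at this
  rw [sub_eq_iff_eq_add] at this
  rw [this, Derivation.smul_apply, add_comm]

theorem eE_eE (n m : ℤ) (hn : -1 ≤ n) (hm : -1 ≤ m) (p : BosonSpace K) :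
    eE K n (eE K m p) - eE K m (eE K n p) = (n - m) • eE K (n + m) p := by
  have h : ⁅eE K n, eE K m⁆ = (n - m) • eE K (n + m) := by
    apply MvPolynomial.derivation_ext
    intro i
    have hi := i.pos
    have key : ∀ n m : ℤ, -1 ≤ n → -1 ≤ m → eE K n (eE K m (MvPolynomial.X i))
        = (((i : ℤ) - m) * ((i : ℤ) - (n + m))) • xX K ((i : ℤ) - (n + m)) := by
      intro n m hn hm
      rw [eE_X, map_zsmul, eE_xX]
      have e : (i : ℤ) - m - n = (i : ℤ) - (n + m) := by ring
      split_ifs with h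
      · rw [e, smul_smul]
      · by_cases h0 : (i : ℤ) - m = 0
        · simp [h0]
        · rw [xX_of_le K ((i : ℤ) - (n + m)) (by omega)]; simp
    rw [Derivation.commutator_apply, key n m hn hm, key m n hm hn, Derivation.smul_apply, eE_X,
      add_comm m n, smul_smul, ← sub_smul]
    congr 1; ring
  have := congrArg (fun D => D p) h
  simp only [Derivation.commutator_apply] at this
  rw [this, Derivation.smul_apply]

theorem qQ_apply (n : ℤ) (p : BosonSpace K) :
    qQ K n p = ∑ k ∈ Finset.Icc 1 n, dD K k (dD K (n - k) p) := by
  simp [qQ, LinearMap.sum_apply]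

theorem dD_qQ (a n : ℤ) (p : BosonSpace K) : dD K a (qQ K n p) = qQ K n (dD K a p) := by
  rw [qQ_apply, qQ_apply, map_sum]
  refine Finset.sum_congr rfl fun k _ => ?_
  rw [dD_comm, dD_comm K a]

theorem qQ_qQ (m n : ℤ) (p : BosonSpace K) : qQ K m (qQ K n p) = qQ K n (qQ K m p) := by
  rw [qQ_apply K m (qQ K n p)]
  simp only [dD_qQ]
  rw [qQ_apply K m p, map_sum]

theorem fin_supp (c : ℤ → ℤ) (s t : ℤ) (p : BosonSpace K) :
    (Function.support fun l : ℤ => c l • dD K (l + t) (dD K (s - l) p)) ⊆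
      (Finset.Icc (1 - t) s : Finset ℤ) := by
  intro l hl
  simp only [Finset.coe_Icc, Set.mem_Icc]
  by_contra hcon
  apply hl
  have : l + t ≤ 0 ∨ s - l ≤ 0 := by omega
  rcases this with h | h
  · simp [dD_of_le K _ h]
  · simp [dD_of_le K _ h]

theorem fin_supp0 (c : ℤ → ℤ) (s : ℤ) (p : BosonSpace K) :
    (Function.support fun l : ℤ => c l • dD K l (dD K (s - l) p)) ⊆
      (Finset.Icc 1 s : Finset ℤ) := by
  simpa using fin_supp K c s 0 p

theorem finsum_Q (n : ℤ) (p : BosonSpace K) :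
    ∑ᶠ k : ℤ, dD K k (dD K (n - k) p) = qQ K n p := by
  rw [qQ_apply]
  apply finsum_eq_sum_of_support_subset
  simpa using fin_supp0 K (fun _ => 1) n p

/-- weighted quadratic sum. -/
def wW (c : ℤ → ℤ) (s : ℤ) (p : BosonSpace K) : BosonSpace K :=
  ∑ᶠ l : ℤ, c l • dD K l (dD K (s - l) p)

theorem wW_symm (c : ℤ → ℤ) (s : ℤ) (p : BosonSpace K) :
    wW K c s p = wW K (fun l => c (s - l)) s p := by
  unfold wW
  rw [← finsum_comp_equiv (Equiv.subLeft s)]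
  refine finsum_congr fun l => ?_
  simp only [Equiv.subLeft_apply, sub_sub_cancel]
  rw [dD_comm]

theorem wW_eq (c : ℤ → ℤ) (s : ℤ) (p : BosonSpace K) :
    wW K c s p = ∑ l ∈ Finset.Icc 1 s, c l • dD K l (dD K (s - l) p) :=
  finsum_eq_sum_of_support_subset _ (fin_supp0 K c s p)

theorem wW_add (c c' : ℤ → ℤ) (s : ℤ) (p : BosonSpace K) :
    wW K c s p + wW K c' s p = wW K (fun l => c l + c' l) s p := by
  simp only [wW_eq, ← Finset.sum_add_distrib, add_smul]

theorem wW_sub (c c' : ℤ → ℤ) (s : ℤ) (p : BosonSpace K) :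
    wW K c s p - wW K c' s p = wW K (fun l => c l - c' l) s p := by
  simp only [wW_eq, ← Finset.sum_sub_distrib, sub_smul]

theorem wW_const (c : ℤ) (s : ℤ) (p : BosonSpace K) :
    wW K (fun _ => c) s p = c • qQ K s p := by
  rw [wW_eq, qQ_apply, Finset.smul_sum]

theorem sum_shift (n m : ℤ) (p : BosonSpace K) :
    ∑ k ∈ Finset.Icc 1 n, (max k 0) • dD K (k + m) (dD K (n - k) p)
      = wW K (fun l => max (l - m) 0) (n + m) p := by
  unfold wW
  rw [← finsum_comp_equiv (Equiv.addRight m)]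
  symm
  simp only [Equiv.coe_addRight, add_sub_cancel_right, add_sub_add_right_eq_sub]
  apply finsum_eq_sum_of_support_subset
  intro l hl
  simp only [Finset.coe_Icc, Set.mem_Icc]
  by_contra hcon
  apply hl
  have : l ≤ 0 ∨ n - l ≤ 0 := by omega
  rcases this with h | h
  · simp [max_eq_right h]
  · simp [dD_of_le K _ h]

theorem sum_shift' (n m : ℤ) (p : BosonSpace K) :
    ∑ k ∈ Finset.Icc 1 n, (max (n - k) 0) • dD K k (dD K (n - k + m) p)
      = wW K (fun l => max (l - m) 0) (n + m) p := by
  rw [wW_symm]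
  unfold wW
  symm
  have : ∀ l, n + m - l = n - l + m := fun l => by ring
  simp only [this, add_sub_cancel_right]
  apply finsum_eq_sum_of_support_subset
  intro l hl
  simp only [Finset.coe_Icc, Set.mem_Icc]
  by_contra hcon
  apply hl
  have : l ≤ 0 ∨ n - l ≤ 0 := by omega
  rcases this with h | h
  · simp [dD_of_le K _ h]
  · simp [max_eq_right h]

theorem qQ_eE (n m : ℤ) (p : BosonSpace K) :
    qQ K n (eE K m p) = eE K m (qQ K n p) + (2 : ℤ) • wW K (fun l => max (l - m) 0) (n + m) p := by
  rw [two_smul]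
  nth_rewrite 1 [← sum_shift]
  rw [← sum_shift', qQ_apply, qQ_apply, map_sum, ← Finset.sum_add_distrib,
    ← Finset.sum_add_distrib]
  refine Finset.sum_congr rfl fun k _ => ?_
  rw [dD_eE, map_add, dD_eE, map_zsmul, add_assoc]

theorem w_main (n m : ℤ) (p : BosonSpace K) :
    (2 : ℤ) • wW K (fun l => max (l - m) 0) (n + m) p
      - (2 : ℤ) • wW K (fun l => max (l - n) 0) (n + m) p = (n - m) • qQ K (n + m) p := by
  rw [wW_symm K (fun l => max (l - n) 0), ← smul_sub, wW_sub, two_smul]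
  nth_rewrite 2 [wW_symm]
  rw [wW_add, ← wW_const]
  congr 1
  funext l
  have h1 : max (l - m) 0 - max (n + m - l - n) 0 = l - m := by omega
  have h2 : max (n + m - l - m) 0 - max (n + m - (n + m - l) - n) 0 = n - l := by omega
  rw [h1, h2]; ring

theorem qE_comm (n m : ℤ) (p : BosonSpace K) :
    qQ K n (eE K m p) + eE K n (qQ K m p) - eE K m (qQ K n p) - qQ K m (eE K n p)
      = (n - m) • qQ K (n + m) p := by
  rw [← w_main, qQ_eE, qQ_eE, add_comm m n]; abel

theorem finsum_E (n : ℤ) (p : BosonSpace K) :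
    ∑ᶠ m : ℤ, (m : BosonSpace K) * (xX K m * dD K (m + n) p) = eE K n p := by
  classical
  set S : Finset ℤ := p.vars.image (fun a : ℕ+ => (a : ℤ) - n) with hS
  have h1 : ∑ᶠ m : ℤ, (m : BosonSpace K) * (xX K m * dD K (m + n) p)
      = ∑ m ∈ S, (m : BosonSpace K) * (xX K m * dD K (m + n) p) := by
    apply finsum_eq_sum_of_support_subset
    intro m hm
    by_contra hcon
    apply hm
    have : dD K (m + n) p = 0 := by
      apply MvPolynomial.derivation_eq_zero_of_forall_mem_vars
      intro i hi
      rw [dD_X, if_neg]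
      intro h
      apply hcon
      simp only [hS, Finset.coe_image, Set.mem_image, Finset.mem_coe]
      exact ⟨i, hi, by omega⟩
    simp [this]
  rw [h1]
  have h2 : ∑ m ∈ S, (m : BosonSpace K) * (xX K m * dD K (m + n) p)
      = (∑ m ∈ S, ((m : BosonSpace K) * xX K m) • dD K (m + n)) p := by
    rw [← Derivation.coeFnAddMonoidHom_apply, map_sum, Finset.sum_apply]
    refine Finset.sum_congr rfl fun m _ => ?_
    simp [mul_assoc]
  rw [h2]
  apply MvPolynomial.derivation_eq_of_forall_mem_vars
  intro i hi
  rw [← Derivation.coeFnAddMonoidHom_apply, map_sum, Finset.sum_apply, eE_X,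
    Finset.sum_eq_single ((i : ℤ) - n)]
  · simp [dD_X]
  · intro b _ hb
    simp only [Derivation.coeFnAddMonoidHom_apply, Derivation.smul_apply, dD_X]
    rw [if_neg (by omega)]; simp
  · intro h
    exact absurd (Finset.mem_image_of_mem _ hi) h

/-- scalar part. -/
def cc (N : ℤ) (D : ℤ → K) (i : ℤ) : Polynomial K :=
  if i ≤ N + 1 then Polynomial.X * Polynomial.C (D i) else 0

theorem Hop_eq (N : ℤ) (D : ℤ → K) (i : ℤ) (p : BosonSpace K) :
    Hop K N D i p = (Polynomial.X : Polynomial K) • dD K i p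
      + (Polynomial.C (2 : K)⁻¹ * Polynomial.X ^ 2 : Polynomial K) • qQ K (i + N - 1) p
      + (Polynomial.X : Polynomial K) • eE K (i + N - 1) p + cc K N D i • p := by
  have e : ∀ m, m + i + N - 1 = m + (i + N - 1) := fun m => by ring
  unfold Hop hbar cc
  simp only [Dop_eq, Xop_eq, finsum_Q, e, finsum_E, MvPolynomial.smul_eq_C_mul]
  split_ifs
  · simp only [map_mul, map_pow]
  · simp

/-- For every integer `N ≥ −1` and scalars `D_1, …, D_{N+1}`, the operators
`H_i`, `i ≥ 1` (the quantum Airy structure of the topological recursion without branched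
covers on the spectral curve `(P¹, −dz/z^N, dz₁dz₂/(z₁−z₂)², −Σ_{k=1}^{N+1} D_k dz/z^{k+1})`),
satisfy `[H_i, H_j] = ℏ (i − j) H_{i+j+N−1}`. -/
theorem statement5 (N : ℤ) (hN : -1 ≤ N) (D : ℤ → K) :
    ∀ i j : ℤ, 1 ≤ i → 1 ≤ j → ∀ p : BosonSpace K,
      Hop K N D i (Hop K N D j p) - Hop K N D j (Hop K N D i p)
        = hbar K * ((i - j : ℤ) : BosonSpace K) * Hop K N D (i + j + N - 1) p := by
  intro i j hi hj p
  have hd1 := dD_eE K i (j + N - 1) p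
  have hd2 := dD_eE K j (i + N - 1) p
  have hq := qE_comm K (i + N - 1) (j + N - 1) p
  have he := eE_eE K (i + N - 1) (j + N - 1) (by omega) (by omega) p
  rw [max_eq_left (by omega)] at hd1 hd2
  have e1 : i + (j + N - 1) = i + j + N - 1 := by ring
  have e2 : j + (i + N - 1) = i + j + N - 1 := by ring
  have e3 : i + N - 1 + (j + N - 1) = i + j + N - 1 + N - 1 := by ring
  have e4 : i + N - 1 - (j + N - 1) = i - j := by ring
  rw [e1] at hd1
  rw [e2] at hd2
  rw [e3, e4] at hq he
  have hdd := dD_comm K i j p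
  have hqq := qQ_qQ K (i + N - 1) (j + N - 1) p
  have hc : (((i - j : ℤ) : Polynomial K) * cc K N D (i + j + N - 1)) • p = 0 := by
    unfold cc
    split_ifs with h
    · have : i - j = 0 := by omega
      rw [this]; simp
    · simp
  have hr : ∀ q : BosonSpace K, hbar K * ((i - j : ℤ) : BosonSpace K) * q
      = (Polynomial.X * ((i - j : ℤ) : Polynomial K)) • q := by
    intro q
    rw [MvPolynomial.smul_eq_C_mul, map_mul, map_intCast]; rfl
  rw [hr]
  simp only [Hop_eq, map_add, Derivation.map_smul, map_smul, dD_qQ]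
  simp only [← Int.cast_smul_eq_zsmul (Polynomial K)] at hd1 hd2 hq he
  set c : Polynomial K := Polynomial.C (2 : K)⁻¹
  push_cast at hd1 hd2 hq he hc ⊢
  linear_combination (norm := module) (Polynomial.X ^ 2 : Polynomial K) • (hd1 - hd2 + he + hdd)
    + (c * Polynomial.X ^ 3 : Polynomial K) • hq + (c ^ 2 * Polynomial.X ^ 4 : Polynomial K) • hqq
    - (Polynomial.X : Polynomial K) • hc

end
end
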